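/- Let n ≥ 5. There is a constant C (depending only on n and η) such that for all x ∈ ℝ^{n-1}, t ∈ ℝ, and s ∈ (−1/10,1/10), the second derivative in s of the inverse Fourier transform of the truncated surface measure satisfies |∂_s² (σ_s^{(0)})^∨(x,t)| ≤ C(1+|t|)^{(2−n)/2 + 2}. -/

import Mathlib

open MeasureTheory Real FourierTransform Filter
open scoped ENNReal RealInnerProductSpace

noncomputable section

/-- `ℝⁿ = ℝ^{n-1} × ℝ`, realized as `EuclideanSpace ℝ (Fin (m+1))` with `m = n-1`
spatial coordinates and the last coordinate playing the role of time. -/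
abbrev Spacetime (m : ℕ) := EuclideanSpace ℝ (Fin (m + 1))

namespace Wave

variable {m : ℕ}

/-- The time coordinate `τ` of a point `z = (ξ, τ)`. -/
def timeCoord (z : Spacetime m) : ℝ := z (Fin.last m)

/-- `g(ξ,τ) = |ξ|² - τ²`, written using `|ξ|² = ‖z‖² - τ²`. -/
def waveSymbol (z : Spacetime m) : ℝ := ‖z‖ ^ 2 - 2 * timeCoord z ^ 2

/-- The canonical surface measure `σ_s` on the level set `g⁻¹(s)` of
`g(ξ,τ) = |ξ|² - τ²`: the `(n-1)`-dimensional Hausdorff measure restricted to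
`g⁻¹(s)` (with the origin deleted). -/
def levelMeasure (m : ℕ) (s : ℝ) : Measure (Spacetime m) :=
  (μH[(m : ℝ)]).restrict {z | waveSymbol z = s ∧ z ≠ 0}

/-- `(σ_s^{(0)})^∨(w)`: the inverse Fourier transform of the truncated surface measure
`σ_s^{(0)} = η σ_s`, evaluated at `w = (x,t)`. -/
def sigmaCheck (η : Spacetime m → ℝ) (s : ℝ) (w : Spacetime m) : ℂ :=
  ∫ z, (η z : ℂ) * Complex.exp (2 * (π : ℂ) * Complex.I * ((⟪z, w⟫ : ℝ) : ℂ))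
    ∂(levelMeasure m s)

end Wave

open Wave

/-!
By the coarea formula, the inverse Fourier transform in `s` of `s ↦ (σ_s^{(0)})^∨(w)` is, up to a
constant, the oscillatory integral `I(w, l) = ∫ e^{2πi(⟪z, w⟫ + l g(z))} 2‖z‖ η(z) dz`. By Fourier
inversion `∂_s^k` costs a factor `l^k`, and it remains to bound `∫ e^{-2πisl} l^k I(w, l) dl`.

The phase `⟪z, w⟫ + l g(z)` has no critical point on the support of `η` unless `|l| ~ ‖w‖`, and away
from that range `I` decays rapidly in `(w, l)`. For `|l| ~ ‖w‖`, the Fourier transform of the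
quadratic phase `l g` turns the integral into an average over `ζ` of
`∫ l^{k-n/2} e^{-2πi(sl + g(w-ζ)/(4l))} dl`. Bounding this by absolute values gives
`‖w‖^{k+1-n/2}`, which suffices when `|t| ~ ‖w‖`. When `|t| ≤ ‖w‖/3`, the point `w - ζ` is far from
the light cone unless `ζ` is large, so `g(w-ζ) ~ ‖w‖²` and van der Corput's second derivative test
improves the bound to `‖w‖^{k+1/2-n/2}`. This exponent is nonpositive when `2k + 1 ≤ n`, so that
`‖w‖` may be replaced by `1 + |t|`.
-/

namespace Wave

open scoped NNReal Topology ContDiff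

section VanDerCorput

variable {a b : ℝ}

theorem hasDerivWithinAt_integral_Ici {E : Type*} [NormedAddCommGroup E] [NormedSpace ℝ E]
    [CompleteSpace E] {f : ℝ → E} (hf : ContinuousOn f (Set.Icc a b)) {x : ℝ}
    (hx : x ∈ Set.Ico a b) :
    HasDerivWithinAt (fun y => ∫ t in a..y, f t) (f x) (Set.Ici x) x := by
  have hnhds : Set.Icc a b ∈ 𝓝[>] x :=
    mem_of_superset (Ioo_mem_nhdsGT hx.2) (Set.Ioo_subset_Icc_self.trans
      (Set.Icc_subset_Icc_left hx.1))
  refine intervalIntegral.integral_hasDerivWithinAt_right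
    (hf.mono ?_).intervalIntegrable
    ⟨_, hnhds, hf.aestronglyMeasurable measurableSet_Icc⟩
    ((hf x (Set.Ico_subset_Icc_self hx)).mono_of_mem_nhdsWithin hnhds)
  rw [Set.uIcc_of_le hx.1]
  exact Set.Icc_subset_Icc_right hx.2.le

theorem continuousOn_integral_Icc {E : Type*} [NormedAddCommGroup E] [NormedSpace ℝ E]
    (hab : a ≤ b) {f : ℝ → E} (hf : ContinuousOn f (Set.Icc a b)) :
    ContinuousOn (fun y => ∫ t in a..y, f t) (Set.Icc a b) := by
  have := intervalIntegral.continuousOn_primitive_interval' (μ := volume) (b₁ := a) (b₂ := b)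
    (a := a) (by rw [← Set.uIcc_of_le hab] at hf; exact hf.intervalIntegrable) Set.left_mem_uIcc
  rwa [Set.uIcc_of_le hab] at this

theorem norm_integral_smul_le_of_norm_primitive_le {E : Type*} [NormedAddCommGroup E]
    [NormedSpace ℝ E] [CompleteSpace E] {f : ℝ → E} {ψ ψ' : ℝ → ℝ} {K M M' : ℝ}
    (hab : a ≤ b) (hf : ContinuousOn f (Set.Icc a b))
    (hK : ∀ x ∈ Set.Icc a b, ‖∫ t in a..x, f t‖ ≤ K)
    (hψ : ∀ x ∈ Set.Icc a b, HasDerivAt ψ (ψ' x) x) (hM : |ψ b| ≤ M)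
    (hM' : ∀ x ∈ Set.Icc a b, |ψ' x| ≤ M') :
    ‖∫ x in a..b, ψ x • f x‖ ≤ K * (M + M' * (b - a)) := by
  have hψc : ContinuousOn ψ (Set.Icc a b) := fun x hx => (hψ x hx).continuousAt.continuousWithinAt
  have hψf : ContinuousOn (fun x => ψ x • f x) (Set.Icc a b) := hψc.smul hf
  -- Integration by parts: `∫ ψ f - ψ F` has derivative `-ψ' F`, where `F` is the primitive of `f`.
  have hderiv : ∀ x ∈ Set.Ico a b, HasDerivWithinAt
      (fun y => (∫ t in a..y, ψ t • f t) - ψ y • ∫ t in a..y, f t)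
      (-(ψ' x • ∫ t in a..x, f t)) (Set.Ici x) x := fun x hx =>
    ((hasDerivWithinAt_integral_Ici hψf hx).sub
      ((hψ x (Set.Ico_subset_Icc_self hx)).hasDerivWithinAt.smul
        (hasDerivWithinAt_integral_Ici hf hx))).congr_deriv (by abel)
  have hbound := norm_image_sub_le_of_norm_deriv_right_le_segment (C := M' * K)
    (f := fun y => (∫ t in a..y, ψ t • f t) - ψ y • ∫ t in a..y, f t)
    ((continuousOn_integral_Icc hab hψf).sub (hψc.smul (continuousOn_integral_Icc hab hf))) hderiv
    (fun x hx => by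
      rw [norm_neg, norm_smul]
      exact mul_le_mul (hM' x (Set.Ico_subset_Icc_self hx)) (hK x (Set.Ico_subset_Icc_self hx))
        (norm_nonneg _) ((abs_nonneg _).trans (hM' x (Set.Ico_subset_Icc_self hx))))
    b ⟨hab, le_rfl⟩
  have hend : ‖ψ b • ∫ t in a..b, f t‖ ≤ M * K := by
    rw [norm_smul]
    exact mul_le_mul hM (hK b ⟨hab, le_rfl⟩) (norm_nonneg _) ((abs_nonneg _).trans hM)
  simp only [intervalIntegral.integral_same, smul_zero, sub_zero] at hbound
  linarith [norm_le_norm_sub_add (∫ x in a..b, ψ x • f x) (ψ b • ∫ t in a..b, f t)]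

theorem abs_div_add_sq_le {μ : ℝ} (hμ : 0 < μ) (p : ℝ) : |p / (μ + p ^ 2)| ≤ 1 / (2 * √μ) := by
  have hsqrt : √μ ^ 2 = μ := Real.sq_sqrt hμ.le
  have hden : 0 < μ + p ^ 2 := by positivity
  rw [abs_div, abs_of_pos hden, div_le_div_iff₀ hden (by positivity)]
  nlinarith [sq_nonneg (√μ - |p|), sq_abs p]

theorem hasDerivAt_arctan_div_sqrt {μ q x : ℝ} (hμ : 0 < μ) {p : ℝ → ℝ} (hp : HasDerivAt p q x) :
    HasDerivAt (fun y => arctan (p y / √μ) / √μ) (q / (μ + p x ^ 2)) x := by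
  refine ((hp.div_const √μ).arctan.div_const √μ).congr_deriv ?_
  have hsqrt : √μ ^ 2 = μ := Real.sq_sqrt hμ.le
  have : 0 < √μ := Real.sqrt_pos.2 hμ
  have : 0 < μ + p x ^ 2 := by positivity
  rw [div_pow, hsqrt]
  field_simp
  rw [hsqrt, mul_comm]

/-- Where the derivative `p` of `φ` satisfies `p' = q`, the function `e^{-iφ} - (i u e^{-iφ})'` with
`u = p / (μ + p²)` equals `r e^{-iφ}` for this `r`. -/
def vanDerCorputRemainder (μ p q : ℝ) : ℂ :=
  (μ / (μ + p ^ 2) : ℝ) - Complex.I * (q * (μ - p ^ 2) / (μ + p ^ 2) ^ 2 : ℝ)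

theorem norm_vanDerCorputRemainder_le {μ p q : ℝ} (hμ : 0 < μ) (hq : μ ≤ q) :
    ‖vanDerCorputRemainder μ p q‖ ≤ 2 * (q / (μ + p ^ 2)) := by
  have hden : 0 < μ + p ^ 2 := by positivity
  have hratio : |μ - p ^ 2| ≤ μ + p ^ 2 := by
    rw [abs_le]; constructor <;> nlinarith [sq_nonneg p]
  refine (norm_sub_le _ _).trans ?_
  rw [norm_mul, Complex.norm_I, one_mul, Complex.norm_real, Complex.norm_real, Real.norm_eq_abs,
    Real.norm_eq_abs, abs_of_pos (by positivity), abs_div, abs_mul, abs_of_pos (hμ.trans_le hq),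
    abs_of_pos (by positivity : 0 < (μ + p ^ 2) ^ 2), two_mul]
  refine add_le_add (by gcongr) ?_
  rw [div_le_div_iff₀ (by positivity) hden, mul_assoc, sq (μ + p ^ 2)]
  have := hμ.trans_le hq
  gcongr

variable {φ p q : ℝ → ℝ} {μ : ℝ}

theorem hasDerivAt_div_add_sq_mul_cexp {x : ℝ} (hμ : 0 < μ) (hφ : HasDerivAt φ (p x) x)
    (hp : HasDerivAt p (q x) x) :
    HasDerivAt (fun y => Complex.I * ((p y / (μ + p y ^ 2) : ℝ) : ℂ) *
        Complex.exp ((-φ y : ℝ) * Complex.I))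
      ((1 - vanDerCorputRemainder μ (p x) (q x)) * Complex.exp ((-φ x : ℝ) * Complex.I)) x := by
  have hden : 0 < μ + p x ^ 2 := by positivity
  have hdenC : (μ + p x ^ 2 : ℂ) ≠ 0 := by exact_mod_cast hden.ne'
  have hu := (hp.div ((hp.pow 2).const_add μ) hden.ne').ofReal_comp.const_mul Complex.I
  have he := (hφ.neg.ofReal_comp.mul_const Complex.I).cexp
  refine (hu.mul he).congr_deriv ?_
  simp only [vanDerCorputRemainder, Pi.neg_apply, Pi.div_apply, Pi.pow_apply]
  push_cast
  field_simp
  linear_combination (-p x ^ 2 * (μ + p x ^ 2) : ℂ) * Complex.I_sq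

theorem norm_integral_cexp_le_of_le_second_deriv (hab : a ≤ b) (hμ : 0 < μ)
    (hφ : ∀ x ∈ Set.Icc a b, HasDerivAt φ (p x) x) (hp : ∀ x ∈ Set.Icc a b, HasDerivAt p (q x) x)
    (hq : ∀ x ∈ Set.Icc a b, μ ≤ q x) :
    ‖∫ x in a..b, Complex.exp ((-φ x : ℝ) * Complex.I)‖ ≤ (2 * π + 1) / √μ := by
  set e : ℝ → ℂ := fun x => Complex.exp ((-φ x : ℝ) * Complex.I)
  set U : ℝ → ℂ := fun x => Complex.I * ((p x / (μ + p x ^ 2) : ℝ) : ℂ) * e x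
  have hU_norm (x : ℝ) : ‖U x‖ ≤ 1 / (2 * √μ) := by
    simpa only [U, e, norm_mul, Complex.norm_I, one_mul, Complex.norm_real,
      Real.norm_eq_abs, Complex.norm_exp_ofReal_mul_I, mul_one] using abs_div_add_sq_le hμ (p x)
  have he : ContinuousOn e (Set.Icc a b) := fun x hx =>
    ((hφ x hx).neg.ofReal_comp.mul_const Complex.I).cexp.continuousAt.continuousWithinAt
  have hU (x) (hx : x ∈ Set.Icc a b) := hasDerivAt_div_add_sq_mul_cexp hμ (hφ x hx) (hp x hx)
  have hderiv : ∀ x ∈ Set.Ico a b, HasDerivWithinAt (fun y => (∫ t in a..y, e t) - U y)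
      (vanDerCorputRemainder μ (p x) (q x) * e x) (Set.Ici x) x := fun x hx =>
    ((hasDerivWithinAt_integral_Ici he hx).sub
      (hU x (Set.Ico_subset_Icc_self hx)).hasDerivWithinAt).congr_deriv (by ring)
  set B : ℝ → ℝ := fun x =>
    1 / (2 * √μ) + 2 * (arctan (p x / √μ) / √μ - arctan (p a / √μ) / √μ)
  have hB (x) (hx : x ∈ Set.Icc a b) : HasDerivAt B (2 * (q x / (μ + p x ^ 2))) x :=
    (((hasDerivAt_arctan_div_sqrt hμ (hp x hx)).sub_const _).const_mul 2).const_add _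
  have hbound := image_norm_le_of_norm_deriv_right_le_deriv_boundary' (B := B)
    (f := fun y => (∫ t in a..y, e t) - U y)
    ((continuousOn_integral_Icc hab he).sub
      fun x hx => (hU x hx).continuousAt.continuousWithinAt) hderiv
    (by simpa only [intervalIntegral.integral_same, zero_sub, norm_neg, B, sub_self, mul_zero,
      add_zero] using hU_norm a)
    (fun x hx => (hB x hx).continuousAt.continuousWithinAt)
    (fun x hx => (hB x (Set.Ico_subset_Icc_self hx)).hasDerivWithinAt)
    (fun x hx => by
      rw [norm_mul, Complex.norm_exp_ofReal_mul_I, mul_one]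
      exact norm_vanDerCorputRemainder_le hμ (hq x (Set.Ico_subset_Icc_self hx)))
    ⟨hab, le_rfl⟩
  have hB_le : B b ≤ 1 / (2 * √μ) + 2 * (π / √μ) := by
    rw [show B b = 1 / (2 * √μ) + 2 * (arctan (p b / √μ) / √μ - arctan (p a / √μ) / √μ) from rfl,
      ← sub_div]
    gcongr
    linarith [arctan_lt_pi_div_two (p b / √μ), neg_pi_div_two_lt_arctan (p a / √μ)]
  calc _ ≤ ‖(∫ x in a..b, e x) - U b‖ + ‖U b‖ := norm_le_norm_sub_add _ _
    _ ≤ 1 / (2 * √μ) + 2 * (π / √μ) + 1 / (2 * √μ) := add_le_add (hbound.trans hB_le) (hU_norm b)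
    _ = (2 * π + 1) / √μ := by ring

/-- The second derivative test of van der Corput. -/
theorem norm_integral_smul_cexp_le_of_le_second_deriv {ψ ψ' : ℝ → ℝ} {M M' : ℝ} (hab : a ≤ b)
    (hμ : 0 < μ) (hφ : ∀ x ∈ Set.Icc a b, HasDerivAt φ (p x) x)
    (hp : ∀ x ∈ Set.Icc a b, HasDerivAt p (q x) x) (hq : ∀ x ∈ Set.Icc a b, μ ≤ q x)
    (hψ : ∀ x ∈ Set.Icc a b, HasDerivAt ψ (ψ' x) x) (hM : |ψ b| ≤ M)
    (hM' : ∀ x ∈ Set.Icc a b, |ψ' x| ≤ M') :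
    ‖∫ x in a..b, ψ x • Complex.exp ((-φ x : ℝ) * Complex.I)‖ ≤
      (2 * π + 1) / √μ * (M + M' * (b - a)) := by
  refine norm_integral_smul_le_of_norm_primitive_le hab (fun x hx =>
    ((hφ x hx).neg.ofReal_comp.mul_const Complex.I).cexp.continuousAt.continuousWithinAt)
    (fun x hx => ?_) hψ hM hM'
  have hsub : Set.Icc a x ⊆ Set.Icc a b := Set.Icc_subset_Icc_right hx.2
  exact norm_integral_cexp_le_of_le_second_deriv hx.1 hμ (fun y hy => hφ y (hsub hy))
    (fun y hy => hp y (hsub hy)) (fun y hy => hq y (hsub hy))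

end VanDerCorput

section Cutoff

variable {E : Type*} [NormedAddCommGroup E] [NormedSpace ℝ E]

theorem contDiff_of_contDiffAt_tsupport {F : Type*} [NormedAddCommGroup F] [NormedSpace ℝ F]
    {f : E → F} {n : WithTop ℕ∞} (hf : ∀ x ∈ tsupport f, ContDiffAt ℝ n f x) :
    ContDiff ℝ n f := by
  refine contDiff_iff_contDiffAt.2 fun x => ?_
  by_cases hx : x ∈ tsupport f
  · exact hf x hx
  · exact (contDiffAt_const (c := (0 : F))).congr_of_eventuallyEq
      (notMem_tsupport_iff_eventuallyEq.1 hx)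

theorem exists_contDiff_hasCompactSupport_eqOn_one [FiniteDimensional ℝ E] {K U : Set E}
    (hK : IsCompact K) (hU : IsOpen U) (hKU : K ⊆ U) :
    ∃ χ : E → ℝ, ContDiff ℝ ∞ χ ∧ HasCompactSupport χ ∧ tsupport χ ⊆ U ∧ Set.EqOn χ 1 K := by
  have := FiniteDimensional.proper_real E
  obtain ⟨L, hL, hKL, hLU⟩ := exists_compact_between hK hU hKU
  obtain ⟨χ, hχ0, hχ1, -⟩ := exists_contMDiffMap_zero_one_of_isClosed (n := ⊤)
    (modelWithCornersSelf ℝ E) (s := (interior L)ᶜ) (t := K) isOpen_interior.isClosed_compl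
    hK.isClosed (Set.disjoint_left.2 fun _ hx hxK => hx (hKL hxK))
  have hsupp : tsupport χ ⊆ L :=
    closure_minimal (fun x hx => interior_subset (by_contra fun h => hx (hχ0 h))) hL.isClosed
  exact ⟨χ, χ.contMDiff.contDiff, hL.of_isClosed_subset (isClosed_tsupport _) hsupp,
    hsupp.trans hLU, hχ1⟩

end Cutoff

section Slice

variable {X Y F : Type*} [TopologicalSpace X] [TopologicalSpace Y]

theorem hasCompactSupport_slice [R1Space X] [Zero F] {f : X × Y → F}
    (hf : HasCompactSupport f) (y : Y) :
    HasCompactSupport fun x => f (x, y) :=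
  .intro (hf.isCompact.image continuous_fst) fun x hx =>
    image_eq_zero_of_notMem_tsupport fun h => hx ⟨(x, y), h, rfl⟩

variable [MeasurableSpace X] (μ : Measure X) [IsFiniteMeasureOnCompacts μ] {A : X × Y → ℂ}

theorem integrable_fourierChar_smul_slice [R1Space X] [OpensMeasurableSpace X] {φ : X × Y → ℝ}
    (hφ : Continuous φ) (hA : Continuous A) (hsupp : HasCompactSupport A) (y : Y) (L : ℝ) :
    Integrable (fun x => 𝐞 (L * φ (x, y)) • A (x, y)) μ :=
  Continuous.integrable_of_hasCompactSupport (by fun_prop)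
    (hasCompactSupport_slice hsupp y).smul_left

theorem exists_norm_integral_fourierChar_smul_le (φ : X × Y → ℝ) (hA : Continuous A)
    (hsupp : HasCompactSupport A) :
    ∃ C, ∀ y L, ‖∫ x, 𝐞 (L * φ (x, y)) • A (x, y) ∂μ‖ ≤ C := by
  obtain ⟨B, hB⟩ := hA.bounded_above_of_compact_support hsupp
  have hZ : IsCompact (Prod.fst '' tsupport A) := hsupp.isCompact.image continuous_fst
  refine ⟨B * μ.real (Prod.fst '' tsupport A), fun y L => ?_⟩
  rw [← setIntegral_eq_integral_of_forall_compl_eq_zero (s := Prod.fst '' tsupport A)]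
  · exact norm_setIntegral_le_of_norm_le_const hZ.measure_lt_top fun x _ => by
      simpa only [Circle.norm_smul] using hB (x, y)
  · intro x hx
    rw [image_eq_zero_of_notMem_tsupport fun h => hx ⟨(x, y), h, rfl⟩, smul_zero]

end Slice

section Nonstationary

variable {E P F ι : Type*} [NormedAddCommGroup E] [NormedSpace ℝ E]
  [NormedAddCommGroup P] [NormedSpace ℝ P] [NormedAddCommGroup F] [NormedSpace ℝ F]

/-- The derivative along `v` in the space variable of a function of a space variable in `E` and a
parameter in `P`. -/
def spaceDeriv (v : E) (f : E × P → F) (q : E × P) : F := fderiv ℝ f q (v, 0)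

theorem contDiff_spaceDeriv {f : E × P → F} (hf : ContDiff ℝ ∞ f) (v : E) :
    ContDiff ℝ ∞ (spaceDeriv v f) :=
  (hf.fderiv_right (by simp)).clm_apply contDiff_const

theorem fderiv_slice_apply {f : E × P → F} {z : E} {p : P} (hf : DifferentiableAt ℝ f (z, p))
    (v : E) : fderiv ℝ (fun z => f (z, p)) z v = spaceDeriv v f (z, p) := by
  have h := hf.hasFDerivAt.comp z (hasFDerivAt_prodMk_left (𝕜 := ℝ) z p)
  rw [show (fun z => f (z, p)) = f ∘ (·, p) from rfl, h.fderiv]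
  rfl

variable [Fintype ι]

/-- The squared length of the gradient in the space variable of a phase `φ`, with respect to the
frame `e`. -/
def phaseGradSq (φ : E × P → ℝ) (e : ι → E) (q : E × P) : ℝ := ∑ j, spaceDeriv (e j) φ q ^ 2

/-- The amplitude produced from `A` by one integration by parts against `exp (2πiLφ)`, up to the
factor `-2πiL`. -/
def ibpAmplitude (φ : E × P → ℝ) (e : ι → E) (A : E × P → ℂ) (q : E × P) : ℂ :=
  ∑ j, spaceDeriv (e j) (fun q => (spaceDeriv (e j) φ q / phaseGradSq φ e q) • A q) q

theorem tsupport_ibpAmplitude_subset (φ : E × P → ℝ) (e : ι → E) (A : E × P → ℂ) :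
    tsupport (ibpAmplitude φ e A) ⊆ tsupport A := by
  refine closure_minimal (fun q hq => ?_) (isClosed_tsupport A)
  obtain ⟨j, -, hj⟩ := Finset.exists_ne_zero_of_sum_ne_zero (Function.mem_support.1 hq)
  exact tsupport_smul_subset_right _ A (tsupport_fderiv_apply_subset ℝ _ (subset_closure hj))

variable {φ : E × P → ℝ} {e : ι → E} {A : E × P → ℂ}

theorem contDiff_phaseGradSq (hφ : ContDiff ℝ ∞ φ) (e : ι → E) :
    ContDiff ℝ ∞ (phaseGradSq φ e) :=
  ContDiff.sum fun j _ => (contDiff_spaceDeriv hφ (e j)).pow 2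

theorem contDiff_div_phaseGradSq_smul (hφ : ContDiff ℝ ∞ φ) (hA : ContDiff ℝ ∞ A)
    (hgrad : ∀ q ∈ tsupport A, phaseGradSq φ e q ≠ 0) (j : ι) :
    ContDiff ℝ ∞ fun q => (spaceDeriv (e j) φ q / phaseGradSq φ e q) • A q :=
  contDiff_of_contDiffAt_tsupport fun q hq =>
    ((contDiff_spaceDeriv hφ (e j)).contDiffAt.div (contDiff_phaseGradSq hφ e).contDiffAt
      (hgrad q (tsupport_smul_subset_right _ A hq))).smul hA.contDiffAt

theorem contDiff_ibpAmplitude (hφ : ContDiff ℝ ∞ φ) (hA : ContDiff ℝ ∞ A)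
    (hgrad : ∀ q ∈ tsupport A, phaseGradSq φ e q ≠ 0) : ContDiff ℝ ∞ (ibpAmplitude φ e A) :=
  ContDiff.sum fun j _ => contDiff_spaceDeriv (contDiff_div_phaseGradSq_smul hφ hA hgrad j) (e j)

theorem sum_spaceDeriv_smul_div_phaseGradSq_smul
    (hgrad : ∀ q ∈ tsupport A, phaseGradSq φ e q ≠ 0) (q : E × P) :
    ∑ j, spaceDeriv (e j) φ q • (spaceDeriv (e j) φ q / phaseGradSq φ e q) • A q = A q := by
  by_cases hq : q ∈ tsupport A
  · simp only [smul_smul, mul_div_assoc', ← sq, ← Finset.sum_smul, ← Finset.sum_div]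
    rw [← phaseGradSq, div_self (hgrad q hq), one_smul]
  · simp [image_eq_zero_of_notMem_tsupport hq]

variable [FiniteDimensional ℝ E] [MeasurableSpace E] [BorelSpace E]
  (μ : Measure E) [μ.IsAddHaarMeasure]

theorem integral_fourierChar_smul_fderiv_smul {φ : E → ℝ} (hφ : ContDiff ℝ 1 φ) {f : E → ℂ}
    (hf : ContDiff ℝ 1 f) (hsupp : HasCompactSupport f) (v : E) (L : ℝ) :
    2 * π * Complex.I * L * ∫ z, 𝐞 (L * φ z) • fderiv ℝ φ z v • f z ∂μ =
      -∫ z, 𝐞 (L * φ z) • fderiv ℝ f z v ∂μ := by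
  have hderiv (z : E) : HasFDerivAt (fun z => (𝐞 (L * φ z) : ℂ))
      ((L • fderiv ℝ φ z).smulRight (2 * π * Complex.I * 𝐞 (L * φ z) : ℂ)) z :=
    (HasFDerivAt.comp (g := fun x => (𝐞 x : ℂ)) z (hasDerivAt_fourierChar (L * φ z)).hasFDerivAt
      ((hφ.differentiable one_ne_zero z).hasFDerivAt.const_mul L)).congr_fderiv (by
        ext; simp; ring)
  have hcont : Continuous fun z => (𝐞 (L * φ z) : ℂ) :=
    continuous_iff_continuousAt.2 fun z => (hderiv z).continuousAt
  have hcont' : Continuous fun z => fderiv ℝ (fun z => (𝐞 (L * φ z) : ℂ)) z v := by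
    simp only [fun z => (hderiv z).fderiv, ContinuousLinearMap.smulRight_apply]
    have := hφ.continuous_fderiv_apply one_ne_zero
    fun_prop
  have hf' : Continuous fun z => fderiv ℝ f z v :=
    (hf.continuous_fderiv one_ne_zero).clm_apply continuous_const
  have hibp := integral_mul_fderiv_eq_neg_fderiv_mul_of_integrable (μ := μ)
    ((hf'.mul hcont).integrable_of_hasCompactSupport (hsupp.fderiv_apply ℝ v).mul_right)
    ((hf.continuous.mul hcont').integrable_of_hasCompactSupport hsupp.mul_right)
    ((hf.continuous.mul hcont).integrable_of_hasCompactSupport hsupp.mul_right)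
    (fun z _ => hf.differentiable one_ne_zero z) fun z _ => (hderiv z).differentiableAt
  simp only [Circle.smul_def, smul_eq_mul, mul_comm (𝐞 _ : ℂ), ← hibp, ← integral_const_mul,
    (hderiv _).fderiv]
  congr 1 with z
  simp
  ring

theorem integral_fourierChar_smul_spaceDeriv_smul (hφ : ContDiff ℝ ∞ φ) (hA : ContDiff ℝ ∞ A)
    (hsupp : HasCompactSupport A) (v : E) (p : P) (L : ℝ) :
    2 * π * Complex.I * L * ∫ z, 𝐞 (L * φ (z, p)) • spaceDeriv v φ (z, p) • A (z, p) ∂μ =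
      -∫ z, 𝐞 (L * φ (z, p)) • spaceDeriv v A (z, p) ∂μ := by
  have hibp := integral_fourierChar_smul_fderiv_smul μ (φ := fun z => φ (z, p))
    (f := fun z => A (z, p)) ((hφ.of_le (by simp)).comp (by fun_prop))
    ((hA.of_le (by simp)).comp (by fun_prop)) (hasCompactSupport_slice hsupp p) v L
  simpa only [fderiv_slice_apply (hφ.differentiable (by simp) _),
    fderiv_slice_apply (hA.differentiable (by simp) _)] using hibp

theorem integral_fourierChar_smul_ibpAmplitude (hφ : ContDiff ℝ ∞ φ) (hA : ContDiff ℝ ∞ A)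
    (hsupp : HasCompactSupport A) (hgrad : ∀ q ∈ tsupport A, phaseGradSq φ e q ≠ 0) (p : P)
    (L : ℝ) :
    2 * π * Complex.I * L * ∫ z, 𝐞 (L * φ (z, p)) • A (z, p) ∂μ =
      -∫ z, 𝐞 (L * φ (z, p)) • ibpAmplitude φ e A (z, p) ∂μ := by
  let X (j : ι) (q : E × P) : ℂ := (spaceDeriv (e j) φ q / phaseGradSq φ e q) • A q
  have hX (j : ι) : ContDiff ℝ ∞ (X j) := contDiff_div_phaseGradSq_smul hφ hA hgrad j
  have hXsupp (j : ι) : HasCompactSupport (X j) :=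
    hsupp.mono (Function.support_smul_subset_right (fun q =>
      spaceDeriv (e j) φ q / phaseGradSq φ e q) A)
  have hsum (z : E) : ∑ j, spaceDeriv (e j) φ (z, p) • X j (z, p) = A (z, p) :=
    sum_spaceDeriv_smul_div_phaseGradSq_smul hgrad (z, p)
  have hint (j : ι) :
      Integrable (fun z => 𝐞 (L * φ (z, p)) • spaceDeriv (e j) φ (z, p) • X j (z, p)) μ :=
    integrable_fourierChar_smul_slice μ hφ.continuous
      ((contDiff_spaceDeriv hφ (e j)).continuous.smul (hX j).continuous) (hXsupp j).smul_left p L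
  have hint' (j : ι) : Integrable (fun z => 𝐞 (L * φ (z, p)) • spaceDeriv (e j) (X j) (z, p)) μ :=
    integrable_fourierChar_smul_slice μ hφ.continuous
      (contDiff_spaceDeriv (hX j) (e j)).continuous ((hXsupp j).fderiv_apply ℝ _) p L
  calc 2 * π * Complex.I * L * ∫ z, 𝐞 (L * φ (z, p)) • A (z, p) ∂μ
    _ = ∑ j, 2 * π * Complex.I * L *
        ∫ z, 𝐞 (L * φ (z, p)) • spaceDeriv (e j) φ (z, p) • X j (z, p) ∂μ := by
      simp only [← Finset.mul_sum, ← integral_finsetSum _ fun j _ => hint j, ← Finset.smul_sum,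
        hsum]
    _ = ∑ j, -∫ z, 𝐞 (L * φ (z, p)) • spaceDeriv (e j) (X j) (z, p) ∂μ :=
      Finset.sum_congr rfl fun j _ =>
        integral_fourierChar_smul_spaceDeriv_smul μ hφ (hX j) (hXsupp j) (e j) p L
    _ = -∫ z, 𝐞 (L * φ (z, p)) • ibpAmplitude φ e A (z, p) ∂μ := by
      rw [Finset.sum_neg_distrib, ← integral_finsetSum _ fun j _ => hint' j]
      simp only [ibpAmplitude, Finset.smul_sum, X]

/-- Nonstationary phase, uniform in the parameter. -/
theorem exists_pow_mul_norm_integral_fourierChar_smul_le (hφ : ContDiff ℝ ∞ φ)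
    (hA : ContDiff ℝ ∞ A) (hsupp : HasCompactSupport A)
    (hgrad : ∀ q ∈ tsupport A, phaseGradSq φ e q ≠ 0) (N : ℕ) :
    ∃ C, ∀ p L, |L| ^ N * ‖∫ z, 𝐞 (L * φ (z, p)) • A (z, p) ∂μ‖ ≤ C := by
  induction N generalizing A with
  | zero => simpa only [pow_zero, one_mul] using
      exists_norm_integral_fourierChar_smul_le μ φ hA.continuous hsupp
  | succ N ih =>
    have hsub := tsupport_ibpAmplitude_subset φ e A
    obtain ⟨C, hC⟩ := ih (contDiff_ibpAmplitude hφ hA hgrad)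
      (hsupp.of_isClosed_subset (isClosed_tsupport _) hsub) fun q hq => hgrad q (hsub hq)
    refine ⟨C / (2 * π), fun p L => ?_⟩
    have hibp := congrArg norm (integral_fourierChar_smul_ibpAmplitude μ hφ hA hsupp hgrad p L)
    simp only [norm_mul, norm_neg, Complex.norm_I, Complex.norm_real, Complex.norm_ofNat,
      norm_eq_abs, abs_of_pos pi_pos, mul_one] at hibp
    rw [le_div_iff₀ two_pi_pos]
    calc |L| ^ (N + 1) * ‖∫ z, 𝐞 (L * φ (z, p)) • A (z, p) ∂μ‖ * (2 * π)
      _ = |L| ^ N * (2 * π * |L| * ‖∫ z, 𝐞 (L * φ (z, p)) • A (z, p) ∂μ‖) := by ring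
      _ ≤ C := hibp ▸ hC p L

theorem exists_pow_mul_norm_integral_fourierChar_smul_le_of_isCompact [FiniteDimensional ℝ P]
    (hφ : ContDiff ℝ ∞ φ) {a : E → ℂ} (ha : ContDiff ℝ ∞ a) (hsupp : HasCompactSupport a)
    {K : Set P} (hK : IsCompact K) (hgrad : ∀ z ∈ tsupport a, ∀ p ∈ K, phaseGradSq φ e (z, p) ≠ 0)
    (N : ℕ) :
    ∃ C, ∀ p ∈ K, ∀ L, |L| ^ N * ‖∫ z, 𝐞 (L * φ (z, p)) • a z ∂μ‖ ≤ C := by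
  obtain ⟨χ, hχ, hχsupp, hχsub, hχ1⟩ := exists_contDiff_hasCompactSupport_eqOn_one
    (hsupp.isCompact.prod hK)
    (isOpen_ne_fun (contDiff_phaseGradSq hφ e).continuous continuous_const)
    (fun q hq => hgrad q.1 hq.1 q.2 hq.2)
  obtain ⟨C, hC⟩ := exists_pow_mul_norm_integral_fourierChar_smul_le μ (e := e)
    (A := fun q => χ q • a q.1) hφ (hχ.smul (ha.comp contDiff_fst)) hχsupp.smul_right
    (fun q hq => hχsub (tsupport_smul_subset_left χ _ hq)) N
  refine ⟨C, fun p hp L => (congrArg (_ * ‖·‖) (integral_congr_ae ?_)).trans_le (hC p L)⟩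
  refine Eventually.of_forall fun z => ?_
  by_cases hz : z ∈ tsupport a
  · simp [hχ1 (Set.mk_mem_prod hz hp)]
  · simp [image_eq_zero_of_notMem_tsupport hz]

end Nonstationary

section AreaFormula

theorem hausdorffMeasure_image_le_of_dist_le {X Y Z : Type*} [MetricSpace Y] [MetricSpace Z]
    [MeasurableSpace Y] [BorelSpace Y] [MeasurableSpace Z] [BorelSpace Z]
    {p : X → Y} {q : X → Z} {s : Set X} {K : ℝ≥0} {d : ℝ} (hd : 0 ≤ d)
    (h : ∀ a ∈ s, ∀ b ∈ s, dist (p a) (p b) ≤ K * dist (q a) (q b)) :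
    μH[d] (p '' s) ≤ (K : ℝ≥0∞) ^ d * μH[d] (q '' s) := by
  rcases s.eq_empty_or_nonempty with rfl | ⟨x₀, -⟩
  · simp
  have : Nonempty X := ⟨x₀⟩
  let r : Z → X := Function.invFunOn q s
  have hr (z) (hz : z ∈ q '' s) : r z ∈ s ∧ q (r z) = z :=
    ⟨Function.invFunOn_mem hz, Function.invFunOn_eq hz⟩
  have hlip : LipschitzOnWith K (p ∘ r) (q '' s) := by
    refine LipschitzOnWith.of_dist_le_mul fun a ha b hb => ?_
    simpa only [Function.comp_apply, (hr a ha).2, (hr b hb).2] using h _ (hr a ha).1 _ (hr b hb).1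
  have himage : p '' s ⊆ (p ∘ r) '' (q '' s) := by
    rintro _ ⟨x, hx, rfl⟩
    have hqx := hr (q x) ⟨x, hx, rfl⟩
    refine ⟨q x, ⟨x, hx, rfl⟩, dist_le_zero.1 ?_⟩
    simpa [hqx.2] using h _ hqx.1 _ hx
  exact (measure_mono himage).trans (hlip.hausdorffMeasure_image_le hd)

theorem measure_le_of_locally_le {X : Type*} [TopologicalSpace X] [SecondCountableTopology X]
    [MeasurableSpace X] [OpensMeasurableSpace X] {κ μ : Measure X} {V : Set X}
    (h : ∀ x ∈ V, ∃ U ∈ 𝓝 x, ∀ s ⊆ U, MeasurableSet s → κ s ≤ μ s)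
    {s : Set X} (hs : MeasurableSet s) (hsV : s ⊆ V) : κ s ≤ μ s := by
  choose! U hU hle using h
  obtain ⟨t, htV, ht, hcover⟩ := TopologicalSpace.countable_cover_nhdsWithin
    (f := fun x => interior (U x)) (s := V)
    fun x hx => mem_nhdsWithin_of_mem_nhds (interior_mem_nhds.2 (hU x hx))
  have := ht.to_subtype
  have hunion : κ.toENNRealVectorMeasure ≤[⋃ x : t, interior (U x)] μ.toENNRealVectorMeasure := by
    refine VectorMeasure.restrict_le_restrict_countable_iUnion _ _
      (fun x => isOpen_interior.measurableSet) fun x =>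
      VectorMeasure.restrict_le_restrict_of_subset_le _ _ fun j hj hjU => ?_
    simp only [Measure.toENNRealVectorMeasure_apply_measurable hj]
    exact hle x (htV x.2) j (hjU.trans interior_subset) hj
  have hsub : s ⊆ ⋃ x : t, interior (U x) := by
    rw [Set.iUnion_coe_set]
    exact hsV.trans hcover
  simpa only [Measure.toENNRealVectorMeasure_apply_measurable hs] using
    VectorMeasure.subset_le_of_restrict_le_restrict _ _
      (MeasurableSet.iUnion fun x => isOpen_interior.measurableSet) hunion hsub

theorem le_of_forall_one_lt_le_pow_mul {a b : ℝ≥0∞} (k : ℕ)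
    (h : ∀ c : ℝ≥0, 1 < c → a ≤ (c : ℝ≥0∞) ^ k * b) : a ≤ b := by
  have hpow : Tendsto (fun c : ℝ≥0 => (c : ℝ≥0∞) ^ k) (𝓝[>] 1) (𝓝 1) := by
    have hcont : Continuous fun c : ℝ≥0 => (c : ℝ≥0∞) ^ k :=
      (ENNReal.continuous_pow k).comp ENNReal.continuous_coe
    simpa using (hcont.tendsto 1).mono_left nhdsWithin_le_nhds
  have hlim := ENNReal.Tendsto.mul_const hpow (Or.inl one_ne_zero) (b := b)
  rw [one_mul] at hlim
  exact ge_of_tendsto hlim (eventually_nhdsWithin_of_forall h)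

theorem exists_nhds_setLIntegral_le {X : Type*} [TopologicalSpace X] [MeasurableSpace X]
    {f : X → ℝ≥0∞} {x : X} (hf : ContinuousAt f x) (h0 : f x ≠ 0) (htop : f x ≠ ⊤)
    {c : ℝ≥0} (hc : 1 < c) (μ : Measure X) :
    ∃ U ∈ 𝓝 x, ∀ s ⊆ U, MeasurableSet s →
      ∫⁻ y in s, f y ∂μ ≤ c * (f x * μ s) ∧ f x * μ s ≤ c * ∫⁻ y in s, f y ∂μ := by
  have hlt : f x < c * f x := by
    simpa using (ENNReal.mul_lt_mul_iff_left h0 htop).2 (ENNReal.one_lt_coe_iff.2 hc)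
  have hmul : ContinuousAt (fun y => c * f y) x :=
    ENNReal.Tendsto.const_mul hf (Or.inr ENNReal.coe_ne_top)
  refine ⟨_, (hf.eventually_lt_const hlt).and (hmul.eventually_const_lt hlt), fun s hsU hs => ?_⟩
  rw [← mul_assoc, ← setLIntegral_const, ← lintegral_const_mul' _ _ ENNReal.coe_ne_top,
    ← setLIntegral_const]
  exact ⟨setLIntegral_mono' hs fun y hy => (hsU hy).1.le,
    setLIntegral_mono' hs fun y hy => (hsU hy).2.le⟩

variable {E F : Type*} [NormedAddCommGroup E] [NormedSpace ℝ E] [FiniteDimensional ℝ E]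
  [NormedAddCommGroup F] [NormedSpace ℝ F] {G : E → F} {x : E}

theorem exists_nhds_dist_le_mul_dist {G' : E →L[ℝ] F} (hG : HasStrictFDerivAt G G' x)
    (hinj : Function.Injective G') {c : ℝ≥0} (hc : 1 < c) :
    ∃ U ∈ 𝓝 x, ∀ a ∈ U, ∀ b ∈ U, dist (G a) (G b) ≤ c * dist (G' a) (G' b) ∧
      dist (G' a) (G' b) ≤ c * dist (G a) (G b) := by
  obtain ⟨K, hK, hanti⟩ := (LinearMap.injective_iff_antilipschitz G'.toLinearMap).1 hinj
  obtain ⟨δ, hδ, hδc⟩ : ∃ δ : ℝ≥0, 0 < δ ∧ c * (1 - δ) = (1 : ℝ) ∧ (1 + δ : ℝ) ≤ c := by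
    have hc' : (1 : ℝ) < c := hc
    refine ⟨1 - c⁻¹, tsub_pos_of_lt (inv_lt_one_of_one_lt₀ hc), ?_⟩
    rw [NNReal.coe_sub (inv_le_one_of_one_le₀ hc.le), NNReal.coe_one, NNReal.coe_inv]
    refine ⟨by field_simp; ring, ?_⟩
    have := mul_inv_cancel₀ (zero_lt_one.trans hc').ne'
    nlinarith [inv_pos.2 (zero_lt_one.trans hc')]
  obtain ⟨U, hU, happrox⟩ := hG.approximates_deriv_on_nhds (c := δ / K) (Or.inr (by positivity))
  refine ⟨U, hU, fun a ha b hb => ?_⟩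
  have hab : ‖G a - G b - (G' a - G' b)‖ ≤ δ * ‖G' a - G' b‖ := by
    have hKab : ‖a - b‖ ≤ K * ‖G' a - G' b‖ := by
      simpa only [dist_eq_norm, ContinuousLinearMap.coe_coe] using hanti.le_mul_dist a b
    have := happrox a ha b hb
    rw [map_sub] at this
    calc ‖G a - G b - (G' a - G' b)‖ ≤ δ / K * ‖a - b‖ := this
      _ ≤ δ / K * (K * ‖G' a - G' b‖) := by gcongr
      _ = δ * ‖G' a - G' b‖ := by field_simp
  have hle := norm_sub_norm_le (G a - G b) (G' a - G' b)
  have hge := norm_sub_norm_le (G' a - G' b) (G a - G b)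
  rw [norm_sub_rev (G' a - G' b)] at hge
  simp only [dist_eq_norm]
  constructor
  · nlinarith [norm_nonneg (G' a - G' b)]
  · nlinarith [norm_nonneg (G' a - G' b), c.coe_nonneg]

variable [MeasurableSpace E] [BorelSpace E] [MeasurableSpace F] [BorelSpace F]

variable {d : ℕ}

/-- The Jacobian of `G` is encoded by an endomorphism `B` that distorts lengths exactly as the
derivative of `G` does, so that no determinant of a map `E → F` is needed. -/
theorem exists_nhds_hausdorffMeasure_image_le (hd : Module.finrank ℝ E = d) {G' : E →L[ℝ] F}
    {B : E →L[ℝ] E} (hG : HasStrictFDerivAt G G' x) (hB : ∀ v, ‖G' v‖ = ‖B v‖)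
    (hdet : B.det ≠ 0) {c : ℝ≥0} (hc : 1 < c) :
    ∃ U ∈ 𝓝 x, ∀ s ⊆ U,
      μH[d] (G '' s) ≤ (c : ℝ≥0∞) ^ d * (ENNReal.ofReal |B.det| * μH[d] s) ∧
      ENNReal.ofReal |B.det| * μH[d] s ≤ (c : ℝ≥0∞) ^ d * μH[d] (G '' s) := by
  subst hd
  have hinj : Function.Injective G' := by
    refine (injective_iff_map_eq_zero G').2 fun v hv => ?_
    have hBv : B v = 0 := norm_eq_zero.1 (by rw [← hB, hv, norm_zero])
    exact (B.toContinuousLinearEquivOfDetNeZero hdet).map_eq_zero_iff.1 hBv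
  have hdist (a b : E) : dist (G' a) (G' b) = dist (B a) (B b) := by
    simp only [dist_eq_norm, ← map_sub, hB]
  obtain ⟨U, hU, hUle⟩ := exists_nhds_dist_le_mul_dist hG hinj hc
  refine ⟨U, hU, fun s hs => ?_⟩
  rw [← Measure.addHaar_image_continuousLinearMap μH[Module.finrank ℝ E] B s,
    ← ENNReal.rpow_natCast]
  simp only [hdist] at hUle
  exact ⟨hausdorffMeasure_image_le_of_dist_le (Nat.cast_nonneg _)
      fun a ha b hb => (hUle a (hs ha) b (hs hb)).1,
    hausdorffMeasure_image_le_of_dist_le (Nat.cast_nonneg _)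
      fun a ha b hb => (hUle a (hs ha) b (hs hb)).2⟩

theorem hausdorffMeasure_image_eq_lintegral (hd : Module.finrank ℝ E = d) (hGc : Continuous G)
    (hGi : Function.Injective G) {V : Set E} (hV : IsOpen V) {G' : E → E →L[ℝ] F}
    {B : E → E →L[ℝ] E} (hG : ∀ y ∈ V, HasStrictFDerivAt G (G' y) y)
    (hB : ∀ y ∈ V, ∀ v, ‖G' y v‖ = ‖B y v‖) (hdet : ∀ y ∈ V, (B y).det ≠ 0)
    (hdetc : ContinuousOn (fun y => (B y).det) V) {s : Set E} (hs : MeasurableSet s) (hsV : s ⊆ V) :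
    μH[d] (G '' s) = ∫⁻ y in s, ENNReal.ofReal |(B y).det| ∂μH[d] := by
  let κ : Measure E := (μH[d] : Measure F).comap G
  let μ : Measure E := (μH[d]).withDensity fun y => ENNReal.ofReal |(B y).det|
  have hκ (t : Set E) : κ t = μH[d] (G '' t) := (hGc.measurableEmbedding hGi).comap_apply _ _
  have hlocal {c : ℝ≥0} (hc : 1 < c) (x) (hx : x ∈ V) : ∃ U ∈ 𝓝 x, ∀ t ⊆ U, MeasurableSet t →
      κ t ≤ (c : ℝ≥0∞) ^ (d + 1) * μ t ∧ μ t ≤ (c : ℝ≥0∞) ^ (d + 1) * κ t := by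
    obtain ⟨U₁, hU₁, himage⟩ :=
      exists_nhds_hausdorffMeasure_image_le hd (hG x hx) (hB x hx) (hdet x hx) hc
    have hcont : ContinuousAt (fun y => ENNReal.ofReal |(B y).det|) x :=
      ENNReal.continuous_ofReal.continuousAt.comp (hdetc.continuousAt (hV.mem_nhds hx)).abs
    obtain ⟨U₂, hU₂, hint⟩ := exists_nhds_setLIntegral_le hcont
      (ENNReal.ofReal_pos.2 (abs_pos.2 (hdet x hx))).ne' ENNReal.ofReal_ne_top hc μH[d]
    refine ⟨U₁ ∩ U₂, inter_mem hU₁ hU₂, fun t htU ht => ?_⟩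
    obtain ⟨hκle, hleκ⟩ := himage t fun y hy => (htU hy).1
    obtain ⟨hμle, hleμ⟩ := hint t (fun y hy => (htU hy).2) ht
    rw [← withDensity_apply _ ht] at hμle hleμ
    rw [← hκ] at hκle hleκ
    constructor
    · exact (hκle.trans (mul_le_mul_right hleμ _)).trans_eq (by rw [pow_succ, mul_assoc])
    · exact (hμle.trans (mul_le_mul_right hleκ _)).trans_eq (by rw [pow_succ', mul_assoc])
  rw [← hκ, ← withDensity_apply _ hs]
  refine le_antisymm
    (le_of_forall_one_lt_le_pow_mul (d + 1) fun c hc => ?_)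
    (le_of_forall_one_lt_le_pow_mul (d + 1) fun c hc => ?_)
  · refine measure_le_of_locally_le (μ := (c : ℝ≥0∞) ^ (d + 1) • μ) (fun x hx => ?_) hs hsV
    obtain ⟨U, hU, hle⟩ := hlocal hc x hx
    exact ⟨U, hU, fun t htU ht => (hle t htU ht).1⟩
  · refine measure_le_of_locally_le (μ := (c : ℝ≥0∞) ^ (d + 1) • κ) (fun x hx => ?_) hs hsV
    obtain ⟨U, hU, hle⟩ := hlocal hc x hx
    exact ⟨U, hU, fun t htU ht => (hle t htU ht).2⟩

end AreaFormula

section WaveSymbol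

variable {m : ℕ}

/-- The coefficients `(1, …, 1, -1)` of the diagonal quadratic form `waveSymbol`. -/
def signature (m : ℕ) (i : Fin (m + 1)) : ℝ := if i = Fin.last m then -1 else 1

theorem signature_eq_or (i : Fin (m + 1)) : signature m i = 1 ∨ signature m i = -1 := by
  unfold signature
  split_ifs <;> simp

theorem signature_mul_self (i : Fin (m + 1)) : signature m i * signature m i = 1 := by
  rcases signature_eq_or i with h | h <;> simp [h]

theorem waveSymbol_eq_sum (z : Spacetime m) : waveSymbol z = ∑ i, signature m i * z i ^ 2 := by
  have hspace (i : Fin m) : signature m i.castSucc = 1 := if_neg (Fin.castSucc_lt_last i).ne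
  have htime : signature m (Fin.last m) = -1 := if_pos rfl
  rw [waveSymbol, timeCoord, EuclideanSpace.real_norm_sq_eq, Fin.sum_univ_castSucc,
    Fin.sum_univ_castSucc]
  simp only [hspace, htime]
  ring_nf

theorem contDiff_waveSymbol : ContDiff ℝ ∞ (waveSymbol : Spacetime m → ℝ) :=
  (contDiff_norm_sq ℝ).sub (contDiff_const.mul ((contDiff_euclidean.1 contDiff_id _).pow 2))

theorem continuous_waveSymbol : Continuous (waveSymbol : Spacetime m → ℝ) :=
  contDiff_waveSymbol.continuous

end WaveSymbol

section Gaussian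

variable {ι : Type*} [Fintype ι] {c : ι → ℂ}

/-- The Gaussian `exp (-π ∑ cᵢ zᵢ²)` with diagonal complex covariance, oscillating when the `cᵢ`
are imaginary. -/
def complexGaussian (c : ι → ℂ) (z : EuclideanSpace ℝ ι) : ℂ :=
  Complex.exp (-(π * ∑ i, c i * (z i : ℂ) ^ 2))

theorem continuous_complexGaussian :
    Continuous fun p : (ι → ℂ) × EuclideanSpace ℝ ι => complexGaussian p.1 p.2 := by
  unfold complexGaussian
  fun_prop

theorem norm_complexGaussian_le (hc : ∀ i, 0 ≤ (c i).re) (z : EuclideanSpace ℝ ι) :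
    ‖complexGaussian c z‖ ≤ 1 := by
  have hre (i : ι) : (c i * (z i : ℂ) ^ 2).re = (c i).re * z i ^ 2 := by
    rw [← Complex.ofReal_pow, Complex.re_mul_ofReal]
  rw [complexGaussian, Complex.norm_exp, Real.exp_le_one_iff, Complex.neg_re,
    Complex.re_ofReal_mul, Complex.re_sum, neg_nonpos]
  simp only [hre]
  exact mul_nonneg pi_pos.le (Finset.sum_nonneg fun i _ => mul_nonneg (hc i) (sq_nonneg _))

theorem fourierChar_smul_complexGaussian (c : ι → ℂ) (w z : EuclideanSpace ℝ ι) :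
    𝐞 ⟪z, w⟫ • complexGaussian c z = Complex.exp
      (-∑ i, (π * c i) * (z i : ℂ) ^ 2 + ∑ i, (2 * π * Complex.I * w i) * z i) := by
  rw [Circle.smul_def, smul_eq_mul, fourierChar_apply, complexGaussian, ← Complex.exp_add,
    PiLp.inner_apply]
  congr 1
  push_cast
  simp only [Finset.mul_sum, Finset.sum_mul, RCLike.inner_apply, conj_trivial,
    ← Finset.sum_neg_distrib, ← Finset.sum_add_distrib]
  exact Finset.sum_congr rfl fun i _ => by push_cast; ring

theorem integrable_fourierChar_smul_complexGaussian (hc : ∀ i, 0 < (c i).re)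
    (w : EuclideanSpace ℝ ι) : Integrable fun z => 𝐞 ⟪z, w⟫ • complexGaussian c z := by
  have hπc (i : ι) : 0 < (π * c i : ℂ).re := by
    rw [Complex.re_ofReal_mul]; exact mul_pos pi_pos (hc i)
  simp only [fourierChar_smul_complexGaussian]
  rw [← (PiLp.volume_preserving_toLp ι).integrable_comp_emb
    (MeasurableEquiv.toLp 2 _).measurableEmbedding]
  exact GaussianFourier.integrable_cexp_neg_sum_mul_add hπc _

theorem fourierInv_complexGaussian (hc : ∀ i, 0 < (c i).re) (w : EuclideanSpace ℝ ι) :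
    𝓕⁻ (complexGaussian c) w = (∏ i, (c i)⁻¹ ^ (1 / 2 : ℂ)) * complexGaussian c⁻¹ w := by
  have hπc (i : ι) : 0 < (π * c i : ℂ).re := by
    rw [Complex.re_ofReal_mul]; exact mul_pos pi_pos (hc i)
  have hπ : (π : ℂ) ≠ 0 := by exact_mod_cast pi_ne_zero
  have hne (i : ι) : c i ≠ 0 := fun h => (hc i).ne' (by rw [h, Complex.zero_re])
  rw [Real.fourierInv_eq]
  simp only [fourierChar_smul_complexGaussian]
  rw [← (PiLp.volume_preserving_toLp ι).integral_comp
    (MeasurableEquiv.toLp 2 _).measurableEmbedding]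
  refine (GaussianFourier.integral_cexp_neg_sum_mul_add hπc _).trans ?_
  rw [Finset.prod_mul_distrib, ← Complex.exp_sum, complexGaussian]
  congr 1
  · refine Finset.prod_congr rfl fun i _ => ?_
    rw [div_mul_cancel_left₀ hπ]
  · congr 1
    rw [Finset.mul_sum, ← Finset.sum_neg_distrib]
    refine Finset.sum_congr rfl fun i _ => ?_
    have := hne i
    rw [Pi.inv_apply]
    field_simp
    linear_combination (4 * (w i : ℂ) ^ 2) * Complex.I_sq

theorem fourier_fourierChar_smul_complexGaussian (hc : ∀ i, 0 < (c i).re)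
    (w ζ : EuclideanSpace ℝ ι) :
    𝓕 (fun z => 𝐞 ⟪z, w⟫ • complexGaussian c z) ζ =
      (∏ i, (c i)⁻¹ ^ (1 / 2 : ℂ)) * complexGaussian c⁻¹ (w - ζ) := by
  rw [← fourierInv_complexGaussian hc, Real.fourier_eq, Real.fourierInv_eq]
  simp only [smul_smul, ← AddChar.map_add_eq_mul, inner_sub_right, neg_add_eq_sub]

theorem integral_mul_fourierChar_smul_complexGaussian (a : SchwartzMap (EuclideanSpace ℝ ι) ℂ)
    (hc : ∀ i, 0 < (c i).re) (w : EuclideanSpace ℝ ι) :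
    ∫ z, a z * (𝐞 ⟪z, w⟫ • complexGaussian c z) =
      (∏ i, (c i)⁻¹ ^ (1 / 2 : ℂ)) *
        ∫ ζ, (𝓕⁻ a : SchwartzMap _ ℂ) ζ * complexGaussian c⁻¹ (w - ζ) := by
  have hinv : 𝓕 ((𝓕⁻ a : SchwartzMap _ ℂ) : EuclideanSpace ℝ ι → ℂ) = a := by
    rw [← SchwartzMap.fourier_coe, FourierTransform.fourier_fourierInv_eq]
  have hflip : ∫ z, 𝓕 ((𝓕⁻ a : SchwartzMap _ ℂ) : EuclideanSpace ℝ ι → ℂ) z *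
      (𝐞 ⟪z, w⟫ • complexGaussian c z) = ∫ ζ, (𝓕⁻ a : SchwartzMap _ ℂ) ζ *
        𝓕 (fun z => 𝐞 ⟪z, w⟫ • complexGaussian c z) ζ := by
    simpa using! VectorFourier.integral_fourierIntegral_smul_eq_flip
      (L := innerₗ (EuclideanSpace ℝ ι)) Real.continuous_fourierChar continuous_inner
      (SchwartzMap.integrable (𝓕⁻ a : SchwartzMap _ ℂ))
      (integrable_fourierChar_smul_complexGaussian hc w)
  rw [hinv] at hflip
  rw [hflip, ← integral_const_mul]
  refine integral_congr_ae (Eventually.of_forall fun ζ => ?_)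
  simp only [fourier_fourierChar_smul_complexGaussian hc]
  ring

theorem continuousOn_integral_mul_complexGaussian {f : EuclideanSpace ℝ ι → ℂ}
    (hf : Integrable f) {T : EuclideanSpace ℝ ι → EuclideanSpace ℝ ι} (hT : Continuous T) :
    ContinuousOn (fun c => ∫ z, f z * complexGaussian c (T z)) {c | ∀ i, 0 ≤ (c i).re} := by
  refine continuousOn_of_dominated (bound := fun z => ‖f z‖) (fun c _ => ?_) (fun c hc => ?_)
    hf.norm (Eventually.of_forall fun z => ?_)
  · exact hf.aestronglyMeasurable.mul (continuous_complexGaussian.comp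
      (continuous_const.prodMk hT)).aestronglyMeasurable
  · refine Eventually.of_forall fun z => ?_
    rw [norm_mul]
    exact mul_le_of_le_one_right (norm_nonneg _) (norm_complexGaussian_le hc _)
  · exact (continuous_const.mul (continuous_complexGaussian.comp
      (continuous_id.prodMk continuous_const))).continuousOn

theorem inv_re_nonneg {x : ℂ} (hx : 0 ≤ x.re) : 0 ≤ (x⁻¹).re := by
  rw [Complex.inv_re]
  exact div_nonneg hx (Complex.normSq_nonneg x)

theorem inv_mem_slitPlane {x : ℂ} (hx : 0 ≤ x.re) (hx0 : x ≠ 0) : x⁻¹ ∈ Complex.slitPlane := by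
  rw [Complex.mem_slitPlane_iff, Complex.inv_re, Complex.inv_im]
  have hnorm : 0 < Complex.normSq x := Complex.normSq_pos.2 hx0
  refine hx.lt_or_eq.imp (fun h => div_pos h hnorm) fun h => div_ne_zero ?_ hnorm.ne'
  exact neg_ne_zero.2 fun him => hx0 (Complex.ext h.symm him)

/-- The case `Re cᵢ = 0` is the limit of `cᵢ + δ` as `δ ↓ 0`. -/
theorem integral_mul_fourierChar_smul_complexGaussian_of_re_nonneg
    (a : SchwartzMap (EuclideanSpace ℝ ι) ℂ) (hc : ∀ i, 0 ≤ (c i).re) (hc0 : ∀ i, c i ≠ 0)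
    (w : EuclideanSpace ℝ ι) :
    ∫ z, a z * (𝐞 ⟪z, w⟫ • complexGaussian c z) =
      (∏ i, (c i)⁻¹ ^ (1 / 2 : ℂ)) *
        ∫ ζ, (𝓕⁻ a : SchwartzMap _ ℂ) ζ * complexGaussian c⁻¹ (w - ζ) := by
  set damped : ℝ → ι → ℂ := fun δ i => c i + δ
  have hdamped_re (δ : ℝ) (i : ι) : δ ≤ (damped δ i).re := by
    rw [Complex.add_re, Complex.ofReal_re]; linarith [hc i]
  have hdamped_zero : damped 0 = c := by ext i; simp [damped]
  have hlim : Tendsto damped (𝓝[>] 0) (𝓝[{c | ∀ i, 0 ≤ (c i).re}] c) := by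
    refine tendsto_nhdsWithin_iff.2 ⟨?_, eventually_mem_nhdsWithin.mono fun δ hδ i =>
      (le_of_lt hδ).trans (hdamped_re δ i)⟩
    have hcont : Continuous damped := by fun_prop
    exact (hcont.tendsto' 0 c hdamped_zero).mono_left nhdsWithin_le_nhds
  have hinv : Tendsto (fun δ => (damped δ)⁻¹) (𝓝[>] 0) (𝓝[{c | ∀ i, 0 ≤ (c i).re}] c⁻¹) := by
    refine tendsto_nhdsWithin_iff.2 ⟨tendsto_pi_nhds.2 fun i => ?_,
      eventually_mem_nhdsWithin.mono fun δ hδ i =>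
        inv_re_nonneg ((le_of_lt hδ).trans (hdamped_re δ i))⟩
    exact (tendsto_pi_nhds.1 (tendsto_nhds_of_tendsto_nhdsWithin hlim) i).inv₀ (hc0 i)
  have hleft := ((continuousOn_integral_mul_complexGaussian (f := fun z => 𝐞 ⟪z, w⟫ • a z)
    (a.integrable.norm.mono' (by fun_prop) (by simp)) continuous_id) c hc).tendsto.comp hlim
  have hright := ((continuousOn_integral_mul_complexGaussian (T := fun ζ => w - ζ)
    (SchwartzMap.integrable (𝓕⁻ a : SchwartzMap _ ℂ)) (continuous_const.sub continuous_id)) c⁻¹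
      fun i => inv_re_nonneg (hc i)).tendsto.comp hinv
  have hprod : Tendsto (fun δ => ∏ i, (damped δ i)⁻¹ ^ (1 / 2 : ℂ)) (𝓝[>] 0)
      (𝓝 (∏ i, (c i)⁻¹ ^ (1 / 2 : ℂ))) := tendsto_finsetProd _ fun i _ =>
    (continuousAt_cpow_const (inv_mem_slitPlane (hc i) (hc0 i))).tendsto.comp
      (tendsto_pi_nhds.1 (tendsto_nhds_of_tendsto_nhdsWithin hinv) i)
  simp only [smul_mul_assoc, ← mul_smul_comm, id_eq] at hleft
  refine tendsto_nhds_unique hleft ((hprod.mul hright).congr' ?_)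
  filter_upwards [self_mem_nhdsWithin] with δ (hδ : 0 < δ)
  exact (integral_mul_fourierChar_smul_complexGaussian a
    (fun i => hδ.trans_le (hdamped_re δ i)) w).symm

end Gaussian

section OscIntegral

variable {m : ℕ}

/-- The oscillatory integral `∫ a(z) exp (2πi (⟪z, w⟫ + l g(z))) dz` with amplitude `a`. -/
def oscIntegral (a : Spacetime m → ℂ) (w : Spacetime m) (l : ℝ) : ℂ :=
  ∫ z, 𝐞 (⟪z, w⟫ + l * waveSymbol z) • a z

theorem complexGaussian_I_mul_signature (l : ℝ) (z : Spacetime m) :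
    complexGaussian (fun i => -2 * Complex.I * l * signature m i) z = 𝐞 (l * waveSymbol z) := by
  rw [complexGaussian, fourierChar_apply, waveSymbol_eq_sum]
  congr 1
  push_cast
  simp only [Finset.mul_sum, Finset.sum_mul, ← Finset.sum_neg_distrib]
  exact Finset.sum_congr rfl fun i _ => by ring

theorem inv_I_mul_signature {l : ℝ} (hl : l ≠ 0) :
    (fun i => -2 * Complex.I * l * signature m i)⁻¹ =
      fun i => -2 * Complex.I * (-(1 / (4 * l)) : ℝ) * signature m i := by
  ext i
  have hlC : (l : ℂ) ≠ 0 := by exact_mod_cast hl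
  have hsign : (signature m i : ℂ) ^ 2 = 1 := by exact_mod_cast (sq _).trans (signature_mul_self i)
  refine inv_eq_of_mul_eq_one_right ?_
  push_cast
  field_simp
  linear_combination (-4 * (signature m i : ℂ) ^ 2) * Complex.I_sq + 4 * hsign

theorem ofReal_mul_cpow {r : ℝ} (hr : 0 < r) {x : ℂ} (hx : x ≠ 0) (y : ℂ) :
    (r * x : ℂ) ^ y = (r : ℂ) ^ y * x ^ y := by
  have hrC : (r : ℂ) ≠ 0 := by exact_mod_cast hr.ne'
  rw [Complex.cpow_def_of_ne_zero (mul_ne_zero hrC hx), Complex.log_ofReal_mul hr hx, add_mul,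
    Complex.exp_add, Complex.cpow_def_of_ne_zero hrC, Complex.cpow_def_of_ne_zero hx,
    Complex.ofReal_log hr.le]

/-- The constant in the stationary phase formula for the phase `waveSymbol`. -/
def stationaryConst (m : ℕ) : ℂ := ∏ i, (Complex.I / 2 * signature m i) ^ (1 / 2 : ℂ)

theorem prod_inv_I_mul_signature {l : ℝ} (hl : 0 < l) :
    ∏ i, (-2 * Complex.I * l * signature m i)⁻¹ ^ (1 / 2 : ℂ) =
      stationaryConst m * (l ^ (-((m + 1 : ℕ) : ℝ) / 2) : ℝ) := by
  have hfactor (i : Fin (m + 1)) : (-2 * Complex.I * l * signature m i)⁻¹ ^ (1 / 2 : ℂ) =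
      (l ^ (-1 / 2 : ℝ) : ℝ) * (Complex.I / 2 * signature m i) ^ (1 / 2 : ℂ) := by
    have hne : Complex.I / 2 * signature m i ≠ 0 := by
      rcases signature_eq_or i with h | h <;> simp [h]
    have hinv := congrFun (inv_I_mul_signature (m := m) hl.ne') i
    simp only [Pi.inv_apply] at hinv
    rw [hinv, show -2 * Complex.I * (-(1 / (4 * l)) : ℝ) * signature m i =
        (l⁻¹ : ℝ) * (Complex.I / 2 * signature m i) by push_cast; field_simp; ring,
      ofReal_mul_cpow (inv_pos.2 hl) hne, neg_div, rpow_neg_eq_inv_rpow,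
      Complex.ofReal_cpow (inv_pos.2 hl).le]
    push_cast
    rfl
  rw [Finset.prod_congr rfl fun i _ => hfactor i, Finset.prod_mul_distrib, mul_comm,
    Finset.prod_const, Finset.card_univ, Fintype.card_fin, ← Complex.ofReal_pow,
    ← rpow_mul_natCast hl.le, stationaryConst]
  congr 3
  ring

/-- Stationary phase is exact for the quadratic phase `waveSymbol`. -/
theorem oscIntegral_eq_integral_fourierInv (a : SchwartzMap (Spacetime m) ℂ) (w : Spacetime m)
    {l : ℝ} (hl : 0 < l) :
    oscIntegral a w l = stationaryConst m * (l ^ (-((m + 1 : ℕ) : ℝ) / 2) : ℝ) *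
      ∫ ζ, 𝐞 (-(waveSymbol (w - ζ) / (4 * l))) • (𝓕⁻ a : SchwartzMap (Spacetime m) ℂ) ζ := by
  have hgauss := integral_mul_fourierChar_smul_complexGaussian_of_re_nonneg a
    (c := fun i => -2 * Complex.I * l * signature m i) (fun i => by simp) (fun i => by
      rcases signature_eq_or i with h | h <;> simp [h, hl.ne']) w
  rw [inv_I_mul_signature hl.ne', prod_inv_I_mul_signature hl] at hgauss
  simp only [complexGaussian_I_mul_signature] at hgauss
  refine Eq.trans ?_ (hgauss.trans ?_)
  · refine integral_congr_ae (Eventually.of_forall fun z => ?_)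
    simp only [AddChar.map_add_eq_mul, Circle.smul_def, Circle.coe_mul, smul_eq_mul]
    ring
  · congr 2 with ζ
    rw [Circle.smul_def, smul_eq_mul, mul_comm]
    congr 3
    ring

end OscIntegral

section OscIntegralNonstationary

variable {m : ℕ}

theorem hasFDerivAt_waveSymbol (z : Spacetime m) :
    HasFDerivAt waveSymbol (∑ i, (2 * signature m i * z i) • EuclideanSpace.proj (𝕜 := ℝ) i) z := by
  rw [funext waveSymbol_eq_sum]
  refine HasFDerivAt.fun_sum fun i _ => ?_
  refine (((EuclideanSpace.proj (𝕜 := ℝ) i).hasFDerivAt.pow 2).const_mul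
    (signature m i)).congr_fderiv ?_
  ext
  simp
  ring

/-- The phase of `oscIntegral`, as a function of `z` and of the parameters `(w, l)`. -/
def oscPhase (q : Spacetime m × Spacetime m × ℝ) : ℝ := ⟪q.1, q.2.1⟫ + q.2.2 * waveSymbol q.1

theorem contDiff_oscPhase : ContDiff ℝ ∞ (oscPhase (m := m)) :=
  (contDiff_fst.inner ℝ contDiff_snd.fst).add
    (contDiff_snd.snd.mul (contDiff_waveSymbol.comp contDiff_fst))

theorem oscPhase_smul (c : ℝ) (z : Spacetime m) (p : Spacetime m × ℝ) :
    oscPhase (z, c • p) = c * oscPhase (z, p) := by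
  simp only [oscPhase, Prod.smul_fst, Prod.smul_snd, inner_smul_right, smul_eq_mul]
  ring

theorem spaceDeriv_oscPhase (i : Fin (m + 1)) (z w : Spacetime m) (l : ℝ) :
    spaceDeriv (EuclideanSpace.single i 1) oscPhase (z, w, l) =
      w i + 2 * l * signature m i * z i := by
  have hslice : HasFDerivAt (fun z => oscPhase (z, w, l)) _ z :=
    ((innerSL ℝ w).hasFDerivAt.congr_of_eventuallyEq (Eventually.of_forall fun z =>
      real_inner_comm w z)).add ((hasFDerivAt_waveSymbol z).const_mul l)
  rw [← fderiv_slice_apply (contDiff_oscPhase.differentiable (by simp) _), hslice.fderiv]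
  simp [EuclideanSpace.inner_single_right, Finset.sum_ite_eq']
  ring

theorem norm_eq_of_phaseGradSq_oscPhase_eq_zero {z w : Spacetime m} {l : ℝ}
    (h : phaseGradSq oscPhase (fun i => EuclideanSpace.single i 1) (z, w, l) = 0) :
    ‖w‖ = 2 * |l| * ‖z‖ := by
  have hcoord (i : Fin (m + 1)) : w i = -(2 * l * signature m i * z i) := by
    have hi := (Finset.sum_eq_zero_iff_of_nonneg fun i _ => sq_nonneg _).1 h i (Finset.mem_univ i)
    rw [spaceDeriv_oscPhase] at hi
    linarith [pow_eq_zero_iff two_ne_zero |>.1 hi]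
  have hsq : ‖w‖ ^ 2 = (2 * |l| * ‖z‖) ^ 2 := by
    rw [mul_pow, mul_pow, sq_abs, EuclideanSpace.real_norm_sq_eq, EuclideanSpace.real_norm_sq_eq,
      Finset.mul_sum]
    refine Finset.sum_congr rfl fun i _ => ?_
    rw [hcoord i]
    linear_combination (4 * l ^ 2 * z i ^ 2) * signature_mul_self i
  exact (pow_left_inj₀ (by positivity) (by positivity) two_ne_zero).1 hsq

theorem phaseGradSq_oscPhase_ne_zero {z w : Spacetime m} {l r R : ℝ} (hr : 0 < r) (hR : 0 < R)
    (hrz : r ≤ ‖z‖) (hzR : ‖z‖ ≤ R) (hne : (w, l) ≠ 0)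
    (hwindow : 4 * R * |l| ≤ ‖w‖ ∨ ‖w‖ ≤ r * |l|) :
    phaseGradSq oscPhase (fun i => EuclideanSpace.single i 1) (z, w, l) ≠ 0 := by
  intro h
  have hw := norm_eq_of_phaseGradSq_oscPhase_eq_zero h
  have hl : l = 0 := by
    rw [← abs_eq_zero]
    refine le_antisymm (not_lt.1 fun hpos => ?_) (abs_nonneg l)
    rcases hwindow with h | h <;> nlinarith
  have hw0 : w = 0 := by simpa [hl] using hw
  exact hne (by simp [hl, hw0])

theorem oscIntegral_smul (a : Spacetime m → ℂ) (c : ℝ) (w : Spacetime m) (l : ℝ) :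
    oscIntegral a (c • w) (c * l) = ∫ z, 𝐞 (c * oscPhase (z, w, l)) • a z := by
  simp only [← oscPhase_smul]
  rfl

theorem norm_oscIntegral_le (a : Spacetime m → ℂ) (w : Spacetime m) (l : ℝ) :
    ‖oscIntegral a w l‖ ≤ ∫ z, ‖a z‖ := by
  simpa only [oscIntegral, Circle.norm_smul] using norm_integral_le_integral_norm (μ := volume)
    fun z : Spacetime m => 𝐞 (⟪z, w⟫ + l * waveSymbol z) • a z

variable {a : Spacetime m → ℂ}

theorem exists_norm_pow_mul_norm_oscIntegral_le (ha : ContDiff ℝ ∞ a) (hsupp : HasCompactSupport a)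
    {r R : ℝ} (hr : 0 < r) (hR : 0 < R) (hrR : ∀ z ∈ tsupport a, r ≤ ‖z‖ ∧ ‖z‖ ≤ R) (N : ℕ) :
    ∃ C, ∀ w l, (w, l) ≠ 0 → (4 * R * |l| ≤ ‖w‖ ∨ ‖w‖ ≤ r * |l|) →
      ‖(w, l)‖ ^ N * ‖oscIntegral a w l‖ ≤ C := by
  let K : Set (Spacetime m × ℝ) :=
    Metric.sphere 0 1 ∩ ({p | 4 * R * |p.2| ≤ ‖p.1‖} ∪ {p | ‖p.1‖ ≤ r * |p.2|})
  have hK : IsCompact K := (isCompact_sphere 0 1).inter_right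
    ((isClosed_le (by fun_prop) (by fun_prop)).union (isClosed_le (by fun_prop) (by fun_prop)))
  have hgrad : ∀ z ∈ tsupport a, ∀ p ∈ K,
      phaseGradSq oscPhase (fun i => EuclideanSpace.single i 1) (z, p) ≠ 0 :=
    fun z hz p hp => phaseGradSq_oscPhase_ne_zero hr hR (hrR z hz).1 (hrR z hz).2
      (ne_zero_of_mem_unit_sphere ⟨p, hp.1⟩) hp.2
  obtain ⟨C, hC⟩ := exists_pow_mul_norm_integral_fourierChar_smul_le_of_isCompact volume
    contDiff_oscPhase ha hsupp hK hgrad N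
  refine ⟨C, fun w l hne hwindow => ?_⟩
  let L := ‖(w, l)‖
  have hLpos : 0 < L := norm_pos_iff.2 hne
  have hmem : L⁻¹ • (w, l) ∈ K := by
    refine ⟨mem_sphere_zero_iff_norm.2 (norm_smul_inv_norm (𝕜 := ℝ) hne), ?_⟩
    simpa only [Prod.smul_mk, Set.mem_union, Set.mem_ofPred_eq, norm_smul, smul_eq_mul, abs_mul,
      norm_eq_abs, mul_left_comm _ |L⁻¹|, mul_le_mul_iff_right₀ (abs_pos.2 (inv_ne_zero hLpos.ne'))]
      using hwindow
  simpa only [Prod.smul_mk, smul_eq_mul, ← oscIntegral_smul, smul_inv_smul₀ hLpos.ne',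
    mul_inv_cancel_left₀ hLpos.ne', abs_of_pos hLpos] using hC _ hmem L

theorem exists_one_add_norm_pow_mul_norm_oscIntegral_le (ha : ContDiff ℝ ∞ a)
    (hsupp : HasCompactSupport a) {r R : ℝ} (hr : 0 < r) (hR : 0 < R)
    (hrR : ∀ z ∈ tsupport a, r ≤ ‖z‖ ∧ ‖z‖ ≤ R) (N : ℕ) :
    ∃ C, ∀ w l, (4 * R * |l| ≤ ‖w‖ ∨ ‖w‖ ≤ r * |l|) →
      (1 + ‖(w, l)‖) ^ N * ‖oscIntegral a w l‖ ≤ C := by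
  obtain ⟨C, hC⟩ := exists_norm_pow_mul_norm_oscIntegral_le ha hsupp hr hR hrR N
  refine ⟨max (∫ z, ‖a z‖) (2 ^ (N - 1) * ((∫ z, ‖a z‖) + C)), fun w l hwindow => ?_⟩
  have htrivial := norm_oscIntegral_le a w l
  obtain h0 | hne := eq_or_ne (w, l) 0
  · rw [h0, norm_zero, add_zero, one_pow, one_mul]
    exact htrivial.trans (le_max_left _ _)
  refine le_trans ?_ (le_max_right _ _)
  calc (1 + ‖(w, l)‖) ^ N * ‖oscIntegral a w l‖
    _ ≤ 2 ^ (N - 1) * (1 ^ N + ‖(w, l)‖ ^ N) * ‖oscIntegral a w l‖ := by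
      gcongr
      exact add_pow_le zero_le_one (norm_nonneg _) N
    _ = 2 ^ (N - 1) * (‖oscIntegral a w l‖ + ‖(w, l)‖ ^ N * ‖oscIntegral a w l‖) := by ring
    _ ≤ 2 ^ (N - 1) * ((∫ z, ‖a z‖) + C) := by gcongr; exact hC w l hne hwindow

end OscIntegralNonstationary

section Fresnel

/-- The oscillatory integral over the frequencies `l ∈ [c, d]` that remains at each point `ζ` of
`oscIntegral_eq_integral_fourierInv`, where `b = waveSymbol (w - ζ)`. -/
def fresnelKernel (α c d s b : ℝ) : ℂ :=
  ∫ l in c..d, 𝐞 (-(s * l + b / (4 * l))) • ((l ^ α : ℝ) : ℂ)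

variable {α c d : ℝ}

theorem norm_fresnelKernel_le (hα : α ≤ 0) (hc : 0 < c) (hcd : c ≤ d) (s b : ℝ) :
    ‖fresnelKernel α c d s b‖ ≤ c ^ α * (d - c) := by
  rw [← abs_of_nonneg (sub_nonneg.2 hcd)]
  refine intervalIntegral.norm_integral_le_of_norm_le_const fun l hl => ?_
  rw [Set.uIoc_of_le hcd] at hl
  rw [Circle.norm_smul, Complex.norm_real, norm_of_nonneg (rpow_nonneg (hc.trans hl.1).le _)]
  exact rpow_le_rpow_of_nonpos hc hl.1.le hα

theorem norm_fresnelKernel_le_of_pos (hα : α ≤ 0) (hc : 0 < c) (hcd : c ≤ d) (s : ℝ) {b : ℝ}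
    (hb : 0 < b) :
    ‖fresnelKernel α c d s b‖ ≤
      (2 * π + 1) / √(π * b / d ^ 3) * (c ^ α + -α * c ^ (α - 1) * (d - c)) := by
  have hpos {l : ℝ} (hl : l ∈ Set.Icc c d) : 0 < l := hc.trans_le hl.1
  have hd : 0 < d := hc.trans_le hcd
  have hvdc := norm_integral_smul_cexp_le_of_le_second_deriv hcd (μ := π * b / d ^ 3)
    (φ := fun l => 2 * π * s * l + π / 2 * b * l⁻¹) (p := fun l => 2 * π * s - π / 2 * b / l ^ 2)
    (q := fun l => π * b / l ^ 3) (ψ := fun l => l ^ α) (ψ' := fun l => α * l ^ (α - 1))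
    (M := c ^ α) (M' := -α * c ^ (α - 1)) (by positivity) (fun l hl => ?_) (fun l hl => ?_)
    (fun l hl => ?_) (fun l hl => hasDerivAt_rpow_const (Or.inl (hpos hl).ne')) ?_
    (fun l hl => ?_)
  · refine (congrArg norm (intervalIntegral.integral_congr fun l _ => ?_)).trans_le hvdc
    have hphase : 2 * π * -(s * l + b / (4 * l)) = -(2 * π * s * l + π / 2 * b * l⁻¹) := by ring
    simp only [Circle.smul_def, fourierChar_apply, Complex.real_smul, smul_eq_mul, hphase]
    exact mul_comm _ _
  · have hl0 := (hpos hl).ne'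
    refine (((hasDerivAt_id l).const_mul (2 * π * s)).add
      ((hasDerivAt_inv hl0).const_mul (π / 2 * b))).congr_deriv ?_
    ring
  · have hl0 := (hpos hl).ne'
    refine ((((hasDerivAt_pow 2 l).inv (pow_ne_zero 2 hl0)).const_mul (π / 2 * b)).const_sub
      (2 * π * s)).congr_deriv ?_
    field_simp
    norm_num
  · have hl0 := hpos hl
    have := hl.2
    gcongr
  · rw [abs_of_nonneg (rpow_nonneg hd.le _)]
    exact rpow_le_rpow_of_nonpos hc hcd hα
  · have hl0 := hpos hl
    rw [abs_mul, abs_of_nonpos hα, abs_of_nonneg (rpow_nonneg hl0.le _)]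
    exact mul_le_mul_of_nonneg_left (rpow_le_rpow_of_nonpos hc hl.1 (by linarith)) (by linarith)

/-- The gain `ρ ^ (-1 / 2)` for `b ≳ ρ ^ 2` comes from the van der Corput test. -/
theorem exists_norm_fresnelKernel_mul_le (hα : α ≤ 0) (hc : 0 < c) (hcd : c ≤ d) {δ : ℝ}
    (hδ : 0 < δ) :
    ∃ C, 0 ≤ C ∧ ∀ ρ s b, 0 < ρ →
      ‖fresnelKernel α (c * ρ) (d * ρ) s b‖ ≤ C * ρ ^ (α + 1) ∧
      (δ * ρ ^ 2 ≤ b → ‖fresnelKernel α (c * ρ) (d * ρ) s b‖ ≤ C * ρ ^ (α + 1 / 2)) := by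
  have hd : 0 < d := hc.trans_le hcd
  have : 0 ≤ d - c := sub_nonneg.2 hcd
  have hα' : 0 ≤ -α := neg_nonneg.2 hα
  set A := c ^ α * (d - c)
  set B := (2 * π + 1) / √(π * δ / d ^ 3) * (c ^ α + -α * c ^ (α - 1) * (d - c))
  have hA : 0 ≤ A := by positivity
  have hB : 0 ≤ B := by positivity
  refine ⟨A + B, add_nonneg hA hB, fun ρ s b hρ => ⟨?_, fun hb => ?_⟩⟩
  · calc ‖fresnelKernel α (c * ρ) (d * ρ) s b‖
        ≤ (c * ρ) ^ α * (d * ρ - c * ρ) := norm_fresnelKernel_le hα (by positivity) (by gcongr) s b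
      _ = A * ρ ^ (α + 1) := by rw [mul_rpow hc.le hρ.le, rpow_add_one hρ.ne']; ring
      _ ≤ (A + B) * ρ ^ (α + 1) := by gcongr; exact le_add_of_nonneg_right hB
  · have hμ : π * δ / d ^ 3 * (√ρ ^ 2)⁻¹ ≤ π * b / (d * ρ) ^ 3 := by
      rw [sq_sqrt hρ.le, ← div_eq_mul_inv, div_div,
        div_le_div_iff₀ (by positivity) (by positivity)]
      calc π * δ * (d * ρ) ^ 3 = π * (d ^ 3 * ρ) * (δ * ρ ^ 2) := by ring
        _ ≤ π * (d ^ 3 * ρ) * b := by gcongr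
        _ = π * b * (d ^ 3 * ρ) := by ring
    calc ‖fresnelKernel α (c * ρ) (d * ρ) s b‖
        ≤ (2 * π + 1) / √(π * b / (d * ρ) ^ 3) *
            ((c * ρ) ^ α + -α * (c * ρ) ^ (α - 1) * (d * ρ - c * ρ)) :=
          norm_fresnelKernel_le_of_pos hα (by positivity) (by gcongr) s
            (lt_of_lt_of_le (by positivity) hb)
      _ ≤ (2 * π + 1) / √(π * δ / d ^ 3 * (√ρ ^ 2)⁻¹) *
            ((c * ρ) ^ α + -α * (c * ρ) ^ (α - 1) * (d * ρ - c * ρ)) := by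
          have : 0 ≤ d * ρ - c * ρ := by rw [← sub_mul]; positivity
          gcongr
      _ = B * ρ ^ (α + 1 / 2) := by
          rw [mul_rpow hc.le hρ.le, mul_rpow hc.le hρ.le, rpow_sub_one hρ.ne', rpow_add hρ,
            ← sqrt_eq_rpow, sqrt_mul (by positivity), sqrt_inv, sqrt_sq (sqrt_nonneg _)]
          simp only [B]
          field_simp
      _ ≤ (A + B) * ρ ^ (α + 1 / 2) := by gcongr; exact le_add_of_nonneg_left hA

end Fresnel

section Stationary

variable {m k : ℕ} {c d : ℝ}

theorem integral_pow_smul_oscIntegral_eq (a : SchwartzMap (Spacetime m) ℂ) (w : Spacetime m)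
    (hc : 0 < c) (hcd : c ≤ d) (s : ℝ) :
    ∫ l in c..d, 𝐞 (-(s * l)) • ((l ^ k : ℝ) • oscIntegral a w l) =
      stationaryConst m * ∫ ζ, (𝓕⁻ a : SchwartzMap (Spacetime m) ℂ) ζ *
        fresnelKernel (k - ((m + 1 : ℕ) : ℝ) / 2) c d s (waveSymbol (w - ζ)) := by
  set α : ℝ := k - ((m + 1 : ℕ) : ℝ) / 2 with hα
  set A : SchwartzMap (Spacetime m) ℂ := 𝓕⁻ a
  let J (l : ℝ) (ζ : Spacetime m) : ℂ :=
    𝐞 (-(s * l + waveSymbol (w - ζ) / (4 * l))) • (((l ^ α : ℝ) : ℂ) * A ζ)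
  have hJ : ∫ l in c..d, 𝐞 (-(s * l)) • ((l ^ k : ℝ) • oscIntegral a w l) =
      ∫ l in c..d, stationaryConst m * ∫ ζ, J l ζ := by
    refine intervalIntegral.integral_congr fun l hl => ?_
    rw [Set.uIcc_of_le hcd] at hl
    have hl0 : 0 < l := hc.trans_le hl.1
    have hpow : l ^ α = l ^ k * l ^ (-((m + 1 : ℕ) : ℝ) / 2) := by
      rw [← rpow_natCast, ← rpow_add hl0, hα, sub_eq_add_neg, neg_div]
    have hJl (ζ : Spacetime m) : J l ζ = (𝐞 (-(s * l)) * ((l ^ α : ℝ) : ℂ)) *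
        𝐞 (-(waveSymbol (w - ζ) / (4 * l))) • A ζ := by
      simp only [J, neg_add, AddChar.map_add_eq_mul, Circle.smul_def, Circle.coe_mul, smul_eq_mul]
      ring
    simp only [oscIntegral_eq_integral_fourierInv a w hl0, hJl, integral_const_mul, hpow,
      Circle.smul_def, Complex.real_smul, smul_eq_mul, Complex.ofReal_mul]
    ring
  have hint : Integrable (Function.uncurry J) ((volume.restrict (Set.Ioc c d)).prod volume) := by
    have hpow : IntegrableOn (fun l : ℝ => ((l ^ α : ℝ) : ℂ)) (Set.Ioc c d) := by
      refine (ContinuousOn.integrableOn_Icc ?_).mono_set Set.Ioc_subset_Icc_self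
      exact Complex.continuous_ofReal.comp_continuousOn (continuousOn_id.rpow_const fun l hl =>
        Or.inl (hc.trans_le hl.1).ne')
    have hg : Measurable (waveSymbol : Spacetime m → ℝ) := continuous_waveSymbol.measurable
    have hphase : Measurable fun q : ℝ × Spacetime m =>
        (𝐞 (-(s * q.1 + waveSymbol (w - q.2) / (4 * q.1))) : ℂ) := by
      fun_prop
    exact (hpow.mul_prod A.integrable).bdd_mul (c := 1) hphase.aestronglyMeasurable
      (Eventually.of_forall fun _ => (Circle.norm_coe _).le)
  rw [hJ, intervalIntegral.integral_const_mul, intervalIntegral.integral_of_le hcd,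
    integral_integral_swap hint]
  congr 1
  refine integral_congr_ae (Eventually.of_forall fun ζ => ?_)
  simp only [J, fresnelKernel, intervalIntegral.integral_of_le hcd, Circle.smul_def, smul_eq_mul,
    ← integral_const_mul]
  congr with l
  ring

theorem norm_integral_pow_smul_oscIntegral_le (a : SchwartzMap (Spacetime m) ℂ) (w : Spacetime m)
    (hc : 0 < c) (hcd : c ≤ d) (s : ℝ) {B : ℝ}
    (hB : ∀ ζ, ‖fresnelKernel (k - ((m + 1 : ℕ) : ℝ) / 2) c d s (waveSymbol (w - ζ))‖ ≤
      B * (1 + ‖ζ‖)) :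
    ‖∫ l in c..d, 𝐞 (-(s * l)) • ((l ^ k : ℝ) • oscIntegral a w l)‖ ≤
      ‖stationaryConst m‖ *
        (∫ ζ, (1 + ‖ζ‖) * ‖(𝓕⁻ a : SchwartzMap (Spacetime m) ℂ) ζ‖) * B := by
  set A : SchwartzMap (Spacetime m) ℂ := 𝓕⁻ a
  have hint : Integrable fun ζ => (1 + ‖ζ‖) * ‖A ζ‖ :=
    (A.integrable.norm.add (A.integrable_pow_mul volume 1)).congr
      (Eventually.of_forall fun ζ => by simp only [Pi.add_apply, pow_one, add_mul, one_mul])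
  rw [integral_pow_smul_oscIntegral_eq a w hc hcd s, norm_mul, mul_assoc, ← integral_mul_const]
  refine mul_le_mul_of_nonneg_left (norm_integral_le_of_norm_le (hint.mul_const B)
    (Eventually.of_forall fun ζ => ?_)) (norm_nonneg _)
  calc ‖A ζ * _‖ ≤ ‖A ζ‖ * (B * (1 + ‖ζ‖)) := by rw [norm_mul]; gcongr; exact hB ζ
    _ = (1 + ‖ζ‖) * ‖A ζ‖ * B := by ring

theorem abs_timeCoord_le (z : Spacetime m) : |timeCoord z| ≤ ‖z‖ :=
  PiLp.norm_apply_le z (Fin.last m)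

theorem le_waveSymbol_sub {w ζ : Spacetime m} (ht : |timeCoord w| ≤ ‖w‖ / 3)
    (hζ : ‖ζ‖ ≤ ‖w‖ / 6) : 7 / 36 * ‖w‖ ^ 2 ≤ waveSymbol (w - ζ) := by
  have hnorm : ‖w‖ * (5 / 6) ≤ ‖w - ζ‖ := by linarith [norm_sub_norm_le w ζ]
  have htime : |timeCoord (w - ζ)| ≤ ‖w‖ / 2 := by
    have hsub : timeCoord (w - ζ) = timeCoord w - timeCoord ζ := rfl
    rw [hsub]
    linarith [abs_sub (timeCoord w) (timeCoord ζ), abs_timeCoord_le ζ]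
  have hnorm_sq := pow_le_pow_left₀ (by positivity) hnorm 2
  have htime_sq := pow_le_pow_left₀ (abs_nonneg _) htime 2
  rw [sq_abs] at htime_sq
  rw [waveSymbol]
  linarith

theorem rpow_le_rpow_abs_mul_rpow {x y K : ℝ} (hx : 0 < x) (hy : 0 < y) (hxy : x ≤ K * y)
    (hyx : y ≤ K * x) (β : ℝ) : x ^ β ≤ K ^ |β| * y ^ β := by
  have hK : 0 < K := pos_of_mul_pos_left (hx.trans_le hxy) hy.le
  rcases le_total 0 β with hβ | hβ
  · rw [abs_of_nonneg hβ, ← mul_rpow hK.le hy.le]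
    exact rpow_le_rpow hx.le hxy hβ
  · rw [abs_of_nonpos hβ, rpow_neg hK.le, ← inv_rpow hK.le, ← mul_rpow (by positivity) hy.le]
    exact rpow_le_rpow_of_nonpos (by positivity) (by rwa [inv_mul_le_iff₀ hK]) hβ

/-- When `|t| ≤ ‖w‖ / 3`, the points `w - ζ` with `‖ζ‖ ≤ ‖w‖ / 6` stay away from the light cone,
and the remaining `ζ` are paid for by the weight `1 + ‖ζ‖`. -/
theorem norm_fresnelKernel_waveSymbol_sub_le {α C s : ℝ} {w : Spacetime m} (hw : 1 ≤ ‖w‖)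
    (hC : 0 ≤ C) (hker : ∀ b, ‖fresnelKernel α c d s b‖ ≤ C * ‖w‖ ^ (α + 1) ∧
      (7 / 36 * ‖w‖ ^ 2 ≤ b → ‖fresnelKernel α c d s b‖ ≤ C * ‖w‖ ^ (α + 1 / 2)))
    (ht : |timeCoord w| ≤ ‖w‖ / 3) (ζ : Spacetime m) :
    ‖fresnelKernel α c d s (waveSymbol (w - ζ))‖ ≤ 6 * (C * ‖w‖ ^ (α + 1 / 2)) * (1 + ‖ζ‖) := by
  have hB : 0 ≤ C * ‖w‖ ^ (α + 1 / 2) := by positivity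
  rcases le_total ‖ζ‖ (‖w‖ / 6) with hζ | hζ
  · refine ((hker _).2 (le_waveSymbol_sub ht hζ)).trans ?_
    nlinarith [mul_nonneg hB (norm_nonneg ζ)]
  · have hsqrt : √‖w‖ ≤ ‖w‖ := sqrt_le_left (by positivity) |>.2 (by nlinarith)
    calc _ ≤ C * ‖w‖ ^ (α + 1) := (hker _).1
      _ = C * ‖w‖ ^ (α + 1 / 2) * √‖w‖ := by
        rw [sqrt_eq_rpow, mul_assoc, ← rpow_add (by linarith)]
        ring_nf
      _ ≤ C * ‖w‖ ^ (α + 1 / 2) * (6 * (1 + ‖ζ‖)) := by gcongr; linarith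
      _ = _ := by ring

theorem exists_norm_fresnelKernel_waveSymbol_sub_le {α : ℝ} (hα : α + 1 / 2 ≤ 0) (hc : 0 < c)
    (hcd : c ≤ d) :
    ∃ C, 0 ≤ C ∧ ∀ (s : ℝ) (w ζ : Spacetime m), 1 ≤ ‖w‖ →
      ‖fresnelKernel α (c * ‖w‖) (d * ‖w‖) s (waveSymbol (w - ζ))‖ ≤
        C * (1 + |timeCoord w|) ^ (α + 1) * (1 + ‖ζ‖) := by
  obtain ⟨C, hC, hker⟩ := exists_norm_fresnelKernel_mul_le (α := α) (by linarith) hc hcd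
    (δ := 7 / 36) (by norm_num)
  set K₁ : ℝ := 4 ^ |α + 1|
  set K₂ : ℝ := 4⁻¹ ^ (α + 1 / 2)
  have hK₁ : 0 ≤ K₁ := by positivity
  have hK₂ : 0 ≤ K₂ := by positivity
  refine ⟨(K₁ + 6 * K₂) * C, by positivity, fun s w ζ hw => ?_⟩
  have hw0 : 0 < ‖w‖ := by linarith
  have hkerw (b : ℝ) := hker ‖w‖ s b hw0
  set T := 1 + |timeCoord w|
  have hT1 : 1 ≤ T := le_add_of_nonneg_right (abs_nonneg _)
  have hT0 : 0 < T := by linarith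
  have hTw : T ≤ 4 * ‖w‖ := by linarith [abs_timeCoord_le w]
  have hζ : (1 : ℝ) ≤ 1 + ‖ζ‖ := le_add_of_nonneg_right (norm_nonneg ζ)
  rcases le_total |timeCoord w| (‖w‖ / 3) with ht | ht
  · have hpow : ‖w‖ ^ (α + 1 / 2) ≤ K₂ * T ^ (α + 1) := by
      calc ‖w‖ ^ (α + 1 / 2) ≤ (4⁻¹ * T) ^ (α + 1 / 2) :=
            rpow_le_rpow_of_nonpos (by positivity) (by linarith) hα
        _ = K₂ * T ^ (α + 1 / 2) := mul_rpow (by norm_num) hT0.le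
        _ ≤ K₂ * T ^ (α + 1) := by gcongr; linarith
    calc _ ≤ 6 * (C * ‖w‖ ^ (α + 1 / 2)) * (1 + ‖ζ‖) :=
          norm_fresnelKernel_waveSymbol_sub_le hw hC hkerw ht ζ
      _ ≤ 6 * (C * (K₂ * T ^ (α + 1))) * (1 + ‖ζ‖) := by gcongr
      _ = (0 + 6 * K₂) * C * T ^ (α + 1) * (1 + ‖ζ‖) := by ring
      _ ≤ (K₁ + 6 * K₂) * C * T ^ (α + 1) * (1 + ‖ζ‖) := by gcongr
  · calc _ ≤ C * ‖w‖ ^ (α + 1) := (hkerw _).1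
      _ ≤ C * (K₁ * T ^ (α + 1)) := by
        gcongr
        exact rpow_le_rpow_abs_mul_rpow hw0 hT0 (by linarith) hTw _
      _ = (K₁ + 6 * 0) * C * T ^ (α + 1) * 1 := by ring
      _ ≤ (K₁ + 6 * K₂) * C * T ^ (α + 1) * (1 + ‖ζ‖) := by gcongr

theorem exists_norm_integral_pow_smul_oscIntegral_le (hk : 2 * k ≤ m)
    (a : SchwartzMap (Spacetime m) ℂ) (hc : 0 < c) (hcd : c ≤ d) :
    ∃ C, 0 ≤ C ∧ ∀ (w : Spacetime m) (s : ℝ), 1 ≤ ‖w‖ →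
      ‖∫ l in (c * ‖w‖)..(d * ‖w‖), 𝐞 (-(s * l)) • ((l ^ k : ℝ) • oscIntegral a w l)‖ ≤
        C * (1 + |timeCoord w|) ^ (k - ((m + 1 : ℕ) : ℝ) / 2 + 1) := by
  have hα : k - ((m + 1 : ℕ) : ℝ) / 2 + 1 / 2 ≤ 0 := by
    have : 2 * (k : ℝ) ≤ m := by exact_mod_cast hk
    push_cast
    linarith
  obtain ⟨C, hC, hker⟩ := exists_norm_fresnelKernel_waveSymbol_sub_le (m := m) hα hc hcd
  refine ⟨‖stationaryConst m‖ *
    (∫ ζ, (1 + ‖ζ‖) * ‖(𝓕⁻ a : SchwartzMap (Spacetime m) ℂ) ζ‖) * C,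
    mul_nonneg (mul_nonneg (norm_nonneg _) (integral_nonneg fun ζ => by positivity)) hC,
    fun w s hw => ?_⟩
  have : 0 < ‖w‖ := by linarith
  rw [mul_assoc]
  exact norm_integral_pow_smul_oscIntegral_le a w (by positivity) (by gcongr) s
    fun ζ => hker s w ζ hw

end Stationary

section Graph

variable {E : Type*} [NormedAddCommGroup E] [InnerProductSpace ℝ E]

/-- An endomorphism with the same metric distortion as the graph map `v ↦ (⟪l, v⟫, v)`. -/
def graphDistortion (l : E) : E →L[ℝ] E :=
  ContinuousLinearMap.id ℝ E + (innerSL ℝ l).smulRight ((1 + √(1 + ‖l‖ ^ 2))⁻¹ • l)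

theorem det_graphDistortion [FiniteDimensional ℝ E] (l : E) :
    (graphDistortion l).det = √(1 + ‖l‖ ^ 2) := by
  have htransvection : (graphDistortion l : E →ₗ[ℝ] E) =
      LinearMap.transvection (innerₛₗ ℝ l) ((1 + √(1 + ‖l‖ ^ 2))⁻¹ • l) := by
    ext v
    simp [graphDistortion, LinearMap.transvection.apply]
  rw [ContinuousLinearMap.det, htransvection, LinearMap.transvection.det, innerₛₗ_apply_apply,
    inner_smul_right, real_inner_self_eq_norm_sq]
  have hsq := Real.sq_sqrt (show 0 ≤ 1 + ‖l‖ ^ 2 by positivity)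
  have := Real.sqrt_nonneg (1 + ‖l‖ ^ 2)
  field_simp
  linarith

theorem norm_graphDistortion_sq (l v : E) :
    ‖graphDistortion l v‖ ^ 2 = ⟪l, v⟫ ^ 2 + ‖v‖ ^ 2 := by
  have happly : graphDistortion l v = v + (⟪l, v⟫ * (1 + √(1 + ‖l‖ ^ 2))⁻¹) • l := by
    simp [graphDistortion, smul_smul]
  have hsq := Real.sq_sqrt (show 0 ≤ 1 + ‖l‖ ^ 2 by positivity)
  have hpos := Real.sqrt_nonneg (1 + ‖l‖ ^ 2)
  rw [happly, norm_add_sq_real, inner_smul_right, norm_smul, real_inner_comm, mul_pow, norm_eq_abs,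
    sq_abs]
  generalize √(1 + ‖l‖ ^ 2) = k at hsq hpos ⊢
  rw [show ‖l‖ ^ 2 = k ^ 2 - 1 by linarith]
  field_simp
  ring

end Graph

section Charts

variable {m : ℕ} (i : Fin (m + 1))

/-- The linear isomorphism sending `(r, y)` to the point of spacetime whose `i`-th coordinate is
`r` and whose other coordinates are `y`. -/
def insertCoord : (ℝ × EuclideanSpace ℝ (Fin m)) ≃L[ℝ] Spacetime m :=
  LinearEquiv.toContinuousLinearEquiv
    { toFun := fun p => WithLp.toLp 2 (i.insertNth p.1 p.2.ofLp)
      invFun := fun z => (z i, WithLp.toLp 2 (i.removeNth z.ofLp))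
      map_add' := fun p q => by
        ext j
        refine Fin.succAboveCases i ?_ (fun k => ?_) j <;> simp
      map_smul' := fun c p => by
        ext j
        refine Fin.succAboveCases i ?_ (fun k => ?_) j <;> simp
      left_inv := fun p => by simp
      right_inv := fun z => by simp }

/-- The part of the wave symbol that does not involve the `i`-th coordinate. -/
def restSymbol (y : EuclideanSpace ℝ (Fin m)) : ℝ :=
  ∑ j, signature m (i.succAbove j) * y j ^ 2

variable (r : ℝ) (y : EuclideanSpace ℝ (Fin m))

theorem insertCoord_apply : insertCoord i (r, y) = WithLp.toLp 2 (i.insertNth r y.ofLp) := rfl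

@[simp] theorem insertCoord_apply_same : insertCoord i (r, y) i = r := by
  simp [insertCoord_apply]

@[simp] theorem insertCoord_apply_succAbove (j : Fin m) :
    insertCoord i (r, y) (i.succAbove j) = y j := by
  simp [insertCoord_apply]

theorem waveSymbol_insertCoord :
    waveSymbol (insertCoord i (r, y)) = signature m i * r ^ 2 + restSymbol i y := by
  rw [waveSymbol_eq_sum, Fin.sum_univ_succAbove _ i]
  simp [restSymbol]

theorem norm_insertCoord_sq : ‖insertCoord i (r, y)‖ ^ 2 = r ^ 2 + ‖y‖ ^ 2 := by
  rw [EuclideanSpace.norm_sq_eq, EuclideanSpace.norm_sq_eq, Fin.sum_univ_succAbove _ i]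
  simp

theorem restrict_graph_eq_map {u : EuclideanSpace ℝ (Fin m) → ℝ} (hu : Continuous u)
    {V : Set (EuclideanSpace ℝ (Fin m))} (hV : IsOpen V)
    {l : EuclideanSpace ℝ (Fin m) → EuclideanSpace ℝ (Fin m)} (hl : ContinuousOn l V)
    (hd : ∀ y ∈ V, HasStrictFDerivAt u (innerSL ℝ (l y)) y) :
    (μH[(m : ℝ)] : Measure (Spacetime m)).restrict ((fun y => insertCoord i (u y, y)) '' V) =
      Measure.map (fun y => insertCoord i (u y, y))
        ((μH[(m : ℝ)].restrict V).withDensity fun y => ENNReal.ofReal (√(1 + ‖l y‖ ^ 2))) := by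
  let G (y : EuclideanSpace ℝ (Fin m)) : Spacetime m := insertCoord i (u y, y)
  have hGc : Continuous G := by fun_prop
  have hGi : Function.Injective G := fun a b hab =>
    (Prod.ext_iff.1 ((insertCoord i).injective hab)).2
  let G' (y : EuclideanSpace ℝ (Fin m)) : EuclideanSpace ℝ (Fin m) →L[ℝ] Spacetime m :=
    (insertCoord i : _ →L[ℝ] Spacetime m).comp
      ((innerSL ℝ (l y)).prod (ContinuousLinearMap.id ℝ _))
  have hG (y) (hy : y ∈ V) : HasStrictFDerivAt G (G' y) y :=
    (insertCoord i).hasStrictFDerivAt.comp y ((hd y hy).prodMk (hasStrictFDerivAt_id y))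
  have hB (y) (_ : y ∈ V) (v) : ‖G' y v‖ = ‖graphDistortion (l y) v‖ := by
    rw [← sq_eq_sq₀ (norm_nonneg _) (norm_nonneg _), norm_graphDistortion_sq]
    exact norm_insertCoord_sq i _ _
  have hdetc : ContinuousOn (fun y => (graphDistortion (l y)).det) V := by
    simp only [det_graphDistortion]
    fun_prop
  ext t ht
  have htG : MeasurableSet (G ⁻¹' t) := hGc.measurable ht
  rw [(hGc.measurableEmbedding hGi).map_apply, withDensity_apply _ htG, Measure.restrict_apply ht,
    Measure.restrict_restrict htG, ← Set.image_preimage_inter,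
    hausdorffMeasure_image_eq_lintegral finrank_euclideanSpace_fin hGc hGi hV hG hB
      (fun y _ => by rw [det_graphDistortion]; positivity) hdetc (htG.inter hV.measurableSet)
      Set.inter_subset_right]
  simp only [det_graphDistortion, abs_of_nonneg (Real.sqrt_nonneg _), G]

end Charts

section LevelChart

variable {m : ℕ}

/-- The `i`-th coordinate, of sign `σ = ±1`, of the point of `{waveSymbol = s}` lying over `y`.
It is zero where there is no such point. -/
def heightOver (i : Fin (m + 1)) (σ s : ℝ) (y : EuclideanSpace ℝ (Fin m)) : ℝ :=
  σ * √(signature m i * (s - restSymbol i y))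

/-- The graph charts of all level sets of `waveSymbol` at once: `(s, y)` is sent to the point of
`{waveSymbol = s}` over `y` whose `i`-th coordinate has sign `σ`, as long as there is one. -/
def levelChart (i : Fin (m + 1)) (σ : ℝ) (p : ℝ × EuclideanSpace ℝ (Fin m)) : Spacetime m :=
  insertCoord i (heightOver i σ p.1 p.2, p.2)

@[fun_prop]
theorem continuous_restSymbol (i : Fin (m + 1)) : Continuous (restSymbol i) := by
  unfold restSymbol
  fun_prop

theorem continuous_heightOver (i : Fin (m + 1)) (σ : ℝ) :
    Continuous fun p : ℝ × EuclideanSpace ℝ (Fin m) => heightOver i σ p.1 p.2 := by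
  unfold heightOver
  fun_prop

theorem continuous_levelChart (i : Fin (m + 1)) (σ : ℝ) : Continuous (levelChart i σ) :=
  (insertCoord i).continuous.comp ((continuous_heightOver i σ).prodMk continuous_snd)

@[simp] theorem levelChart_apply_same (i : Fin (m + 1)) (σ : ℝ)
    (p : ℝ × EuclideanSpace ℝ (Fin m)) : levelChart i σ p i = heightOver i σ p.1 p.2 :=
  insertCoord_apply_same i _ _

theorem norm_levelChart_sq (i : Fin (m + 1)) (σ : ℝ) (p : ℝ × EuclideanSpace ℝ (Fin m)) :
    ‖levelChart i σ p‖ ^ 2 = heightOver i σ p.1 p.2 ^ 2 + ‖p.2‖ ^ 2 :=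
  norm_insertCoord_sq i _ _

variable {i : Fin (m + 1)} {σ s : ℝ} {y : EuclideanSpace ℝ (Fin m)}

theorem pos_of_heightOver_ne_zero (h : heightOver i σ s y ≠ 0) :
    0 < signature m i * (s - restSymbol i y) := by
  contrapose! h
  rw [heightOver, Real.sqrt_eq_zero_of_nonpos h, mul_zero]

theorem heightOver_sq (hσ : σ * σ = 1) (h : heightOver i σ s y ≠ 0) :
    heightOver i σ s y ^ 2 = signature m i * (s - restSymbol i y) := by
  rw [heightOver, mul_pow, Real.sq_sqrt (pos_of_heightOver_ne_zero h).le, pow_two, hσ, one_mul]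

theorem waveSymbol_levelChart (hσ : σ * σ = 1) (h : heightOver i σ s y ≠ 0) :
    waveSymbol (levelChart i σ (s, y)) = s := by
  rw [levelChart, waveSymbol_insertCoord, heightOver_sq hσ h, ← mul_assoc, signature_mul_self]
  ring

theorem image_levelChart (hσ : σ * σ = 1) :
    (fun y => levelChart i σ (s, y)) '' {y | heightOver i σ s y ≠ 0} =
      {z : Spacetime m | waveSymbol z = s ∧ 0 < σ * z i} := by
  ext z
  constructor
  · rintro ⟨y, hy, rfl⟩
    refine ⟨waveSymbol_levelChart hσ hy, ?_⟩
    rw [levelChart_apply_same, heightOver, ← mul_assoc, hσ, one_mul]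
    exact Real.sqrt_pos.2 (pos_of_heightOver_ne_zero hy)
  · rintro ⟨hz, hpos⟩
    obtain ⟨⟨r, y⟩, rfl⟩ := (insertCoord i).surjective z
    rw [waveSymbol_insertCoord] at hz
    rw [insertCoord_apply_same] at hpos
    have hsq : signature m i * (s - restSymbol i y) = (σ * r) ^ 2 := by
      rw [← hz, add_sub_cancel_right, ← mul_assoc, signature_mul_self, mul_pow, pow_two σ, hσ]
    have hheight : heightOver i σ s y = r := by
      rw [heightOver, hsq, Real.sqrt_sq hpos.le, ← mul_assoc, hσ, one_mul]
    exact ⟨y, by simpa [hheight] using right_ne_zero_of_mul hpos.ne', by simp [levelChart, hheight]⟩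

theorem injective_levelChart (i : Fin (m + 1)) (σ s : ℝ) :
    Function.Injective fun y => levelChart i σ (s, y) :=
  fun _ _ h => (Prod.ext_iff.1 ((insertCoord i).injective h)).2

/-- The gradient of `heightOver`, obtained by differentiating
`signature m i * heightOver ^ 2 + restSymbol = s`. -/
def graphSlope (i : Fin (m + 1)) (σ s : ℝ) (y : EuclideanSpace ℝ (Fin m)) :
    EuclideanSpace ℝ (Fin m) :=
  WithLp.toLp 2 fun j =>
    -(signature m i * signature m (i.succAbove j) * y j / heightOver i σ s y)

theorem hasStrictFDerivAt_restSymbol (i : Fin (m + 1)) (y : EuclideanSpace ℝ (Fin m)) :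
    HasStrictFDerivAt (restSymbol i) (∑ j, (signature m (i.succAbove j) * (2 * y j)) •
      (EuclideanSpace.proj j : EuclideanSpace ℝ (Fin m) →L[ℝ] ℝ)) y := by
  refine HasStrictFDerivAt.fun_sum fun j _ => ?_
  have hproj := (EuclideanSpace.proj j : EuclideanSpace ℝ (Fin m) →L[ℝ] ℝ).hasStrictFDerivAt
    (x := y)
  refine ((hproj.pow 2).const_mul (signature m (i.succAbove j))).congr_fderiv ?_
  ext v
  simp only [PiLp.proj_apply, Nat.add_one_sub_one, pow_one, nsmul_eq_mul, Nat.cast_ofNat,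
    smul_apply, smul_eq_mul]
  ring

theorem hasStrictFDerivAt_heightOver (hσ : σ * σ = 1) (h : heightOver i σ s y ≠ 0) :
    HasStrictFDerivAt (heightOver i σ s) (innerSL ℝ (graphSlope i σ s y)) y := by
  have hpos := Real.sqrt_pos.2 (pos_of_heightOver_ne_zero h)
  have harg := ((hasStrictFDerivAt_restSymbol i y).const_sub s).const_mul (signature m i)
  have hsqrt := (Real.hasStrictDerivAt_sqrt
    (pos_of_heightOver_ne_zero h).ne').comp_hasStrictFDerivAt y harg
  refine (hsqrt.const_mul σ).congr_fderiv ?_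
  ext v
  have hσ0 : σ ≠ 0 := left_ne_zero_of_mul h
  simp only [one_div, mul_inv_rev, smul_neg, neg_apply, smul_apply, sum_apply, PiLp.proj_apply,
    smul_eq_mul, Finset.mul_sum, graphSlope, heightOver, coe_innerSL_apply, PiLp.inner_apply,
    RCLike.inner_apply, ringHom_apply, mul_neg, Finset.sum_neg_distrib, neg_inj]
  refine Finset.sum_congr rfl fun j _ => ?_
  field_simp
  rw [pow_two, hσ]
  ring

theorem norm_graphSlope_sq (i : Fin (m + 1)) (σ s : ℝ) (y : EuclideanSpace ℝ (Fin m)) :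
    ‖graphSlope i σ s y‖ ^ 2 = ‖y‖ ^ 2 / heightOver i σ s y ^ 2 := by
  rw [EuclideanSpace.real_norm_sq_eq, EuclideanSpace.real_norm_sq_eq, Finset.sum_div]
  refine Finset.sum_congr rfl fun j _ => ?_
  simp only [graphSlope, neg_sq, div_pow, mul_pow]
  rw [pow_two (signature m i), pow_two (signature m _), signature_mul_self, signature_mul_self,
    one_mul, one_mul]

theorem continuousOn_graphSlope (i : Fin (m + 1)) (σ s : ℝ) :
    ContinuousOn (graphSlope i σ s) {y | heightOver i σ s y ≠ 0} := by
  have hheight : Continuous (heightOver i σ s) :=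
    (continuous_heightOver i σ).comp (Continuous.prodMk_right s)
  refine (PiLp.continuous_toLp 2 _).comp_continuousOn (continuousOn_pi.2 fun j => ?_)
  exact ((Continuous.continuousOn (by fun_prop)).div hheight.continuousOn fun y hy => hy).neg

theorem sqrt_one_add_norm_graphSlope_sq (h : heightOver i σ s y ≠ 0) :
    √(1 + ‖graphSlope i σ s y‖ ^ 2) =
      ‖levelChart i σ (s, y)‖ / |levelChart i σ (s, y) i| := by
  rw [Real.sqrt_eq_iff_mul_self_eq (by positivity) (by positivity), norm_graphSlope_sq,
    ← pow_two, div_pow, norm_levelChart_sq, levelChart_apply_same, sq_abs]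
  field_simp

theorem density_smul_levelChart {F : Type*} [AddCommGroup F] [Module ℝ F]
    (h : heightOver i σ s y ≠ 0) (v : F) :
    (‖levelChart i σ (s, y)‖ / |levelChart i σ (s, y) i|).toNNReal •
      (|levelChart i σ (s, y) i| / ‖levelChart i σ (s, y)‖) • v = v := by
  have hcoord : levelChart i σ (s, y) i ≠ 0 := by rwa [levelChart_apply_same]
  have hnorm : ‖levelChart i σ (s, y)‖ ≠ 0 :=
    norm_ne_zero_iff.2 fun h => hcoord (by rw [h, PiLp.zero_apply])
  rw [NNReal.smul_def, Real.coe_toNNReal _ (by positivity), smul_smul,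
    div_mul_div_cancel₀ (abs_ne_zero.2 hcoord), div_self hnorm, one_smul]

theorem hasCompactSupport_comp_levelChart {F : Type*} [Zero F] {k : Spacetime m → F}
    (hσ : σ * σ = 1) (hk : HasCompactSupport k) (hk0 : ∀ z, z i = 0 → k z = 0) :
    HasCompactSupport fun p => k (levelChart i σ p) := by
  have hcont : Continuous fun z : Spacetime m => (waveSymbol z, ((insertCoord i).symm z).2) :=
    continuous_waveSymbol.prodMk (continuous_snd.comp (insertCoord i).symm.continuous)
  refine HasCompactSupport.intro (hk.isCompact.image hcont) fun ⟨s, y⟩ hp => ?_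
  contrapose! hp
  have hheight : heightOver i σ s y ≠ 0 := fun h =>
    hp (hk0 _ ((levelChart_apply_same i σ (s, y)).trans h))
  refine ⟨levelChart i σ (s, y), subset_tsupport k hp, ?_⟩
  refine Prod.ext (waveSymbol_levelChart hσ hheight) ?_
  simp only [levelChart, ContinuousLinearEquiv.symm_apply_apply]

end LevelChart

section SurfaceIntegral

variable {m : ℕ} {F : Type*} [NormedAddCommGroup F]

/-- The constant by which the `m`-dimensional Hausdorff measure on `ℝ^m` differs from Lebesgue
measure. -/
def hausdorffFactor (m : ℕ) : ℝ≥0 :=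
  (μH[(m : ℝ)] : Measure (EuclideanSpace ℝ (Fin m))).addHaarScalarFactor volume

theorem hausdorffMeasure_eq_smul_volume (m : ℕ) :
    (μH[(m : ℝ)] : Measure (EuclideanSpace ℝ (Fin m))) = hausdorffFactor m • volume :=
  Measure.isAddLeftInvariant_eq_smul _ _

variable {i : Fin (m + 1)} {σ : ℝ} {k : Spacetime m → F}

theorem integrable_comp_levelChart (hσ : σ * σ = 1) (hkc : Continuous k)
    (hk : HasCompactSupport k) (hk0 : ∀ z, z i = 0 → k z = 0) :
    Integrable (fun p => k (levelChart i σ p)) (volume.prod volume) :=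
  (hkc.comp (continuous_levelChart i σ)).integrable_of_hasCompactSupport
    (hasCompactSupport_comp_levelChart hσ hk hk0)

theorem integrable_comp_levelChart_right (hσ : σ * σ = 1) (hkc : Continuous k)
    (hk : HasCompactSupport k) (hk0 : ∀ z, z i = 0 → k z = 0) (s : ℝ) :
    Integrable fun y => k (levelChart i σ (s, y)) := by
  have hsupp := (hasCompactSupport_comp_levelChart hσ hk hk0).isCompact.image continuous_snd
  refine (hkc.comp ((continuous_levelChart i σ).comp
    (Continuous.prodMk_right s))).integrable_of_hasCompactSupport
    (HasCompactSupport.intro hsupp fun y hy => ?_)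
  contrapose! hy
  exact ⟨(s, y), subset_tsupport _ hy, rfl⟩

variable [NormedSpace ℝ F]

theorem restrict_levelSet_eq_map (hσ : σ * σ = 1) (s : ℝ) :
    (μH[m] : Measure (Spacetime m)).restrict {z | waveSymbol z = s ∧ 0 < σ * z i} =
      Measure.map (fun y => levelChart i σ (s, y))
        ((μH[m].restrict {y | heightOver i σ s y ≠ 0}).withDensity fun y =>
          ENNReal.ofReal (‖levelChart i σ (s, y)‖ / |levelChart i σ (s, y) i|)) := by
  have hheight : Continuous (heightOver i σ s) :=
    (continuous_heightOver i σ).comp (Continuous.prodMk_right s)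
  have hopen : IsOpen {y | heightOver i σ s y ≠ 0} := hheight.isOpen_preimage _ isOpen_ne
  rw [← image_levelChart hσ]
  refine (restrict_graph_eq_map i hheight hopen (continuousOn_graphSlope i σ s)
    fun y hy => hasStrictFDerivAt_heightOver hσ hy).trans ?_
  congr 1
  refine withDensity_congr_ae ?_
  filter_upwards [ae_restrict_mem hopen.measurableSet] with y hy
  rw [sqrt_one_add_norm_graphSlope_sq hy]

theorem integral_levelSet_sign (hkc : Continuous k) (hk : HasCompactSupport k)
    (hk0 : ∀ z, z i = 0 → k z = 0) (hσ : σ * σ = 1) (s : ℝ) :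
    IntegrableOn (fun z => (|z i| / ‖z‖) • k z) {z | waveSymbol z = s ∧ 0 < σ * z i} μH[m] ∧
      ∫ z in {z | waveSymbol z = s ∧ 0 < σ * z i}, (|z i| / ‖z‖) • k z ∂μH[m] =
        hausdorffFactor m • ∫ y, k (levelChart i σ (s, y)) := by
  have hchart : Continuous fun y => levelChart i σ (s, y) :=
    (continuous_levelChart i σ).comp (Continuous.prodMk_right s)
  have hopen : IsOpen {y | heightOver i σ s y ≠ 0} :=
    ((continuous_heightOver i σ).comp (Continuous.prodMk_right s)).isOpen_preimage _ isOpen_ne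
  have hemb := hchart.measurableEmbedding (injective_levelChart i σ s)
  have hdensity : Measurable fun y =>
      (‖levelChart i σ (s, y)‖ / |levelChart i σ (s, y) i|).toNNReal :=
    (hchart.norm.measurable.div
      ((EuclideanSpace.proj i).continuous.comp hchart).abs.measurable).real_toNNReal
  have hcancel : ∀ᵐ y ∂μH[m].restrict {y | heightOver i σ s y ≠ 0},
      (‖levelChart i σ (s, y)‖ / |levelChart i σ (s, y) i|).toNNReal •
        (|levelChart i σ (s, y) i| / ‖levelChart i σ (s, y)‖) • k (levelChart i σ (s, y)) =
      k (levelChart i σ (s, y)) := by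
    filter_upwards [ae_restrict_mem hopen.measurableSet] with y hy
      using density_smul_levelChart hy _
  have hint : Integrable (fun y => k (levelChart i σ (s, y))) μH[m] := by
    rw [hausdorffMeasure_eq_smul_volume]
    exact (integrable_comp_levelChart_right hσ hkc hk hk0 s).smul_measure_nnreal
  rw [IntegrableOn, restrict_levelSet_eq_map hσ, hemb.integrable_map_iff, hemb.integral_map]
  constructor
  · exact (integrable_withDensity_iff_integrable_smul hdensity).2
      ((integrable_congr hcancel).2 hint.restrict)
  · refine (integral_withDensity_eq_integral_smul hdensity _).trans ?_
    rw [integral_congr_ae hcancel, setIntegral_eq_integral_of_forall_compl_eq_zero,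
      hausdorffMeasure_eq_smul_volume, integral_smul_nnreal_measure]
    intro y hy
    exact hk0 _ ((levelChart_apply_same i σ (s, y)).trans (not_not.1 hy))

end SurfaceIntegral

section Coarea

variable {m : ℕ} {F : Type*} [NormedAddCommGroup F] [NormedSpace ℝ F]

/-- The weight `|z i| / ‖z‖` that makes a surface integral smooth in the chart solving for the
`i`-th coordinate. Its square serves as a partition of unity subordinate to these charts. -/
def coordWeight (i : Fin (m + 1)) (h : Spacetime m → F) (z : Spacetime m) : F :=
  (|z i| / ‖z‖) • h z

theorem coordWeight_eq_zero (i : Fin (m + 1)) (h : Spacetime m → F) {z : Spacetime m}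
    (hz : z i = 0) : coordWeight i h z = 0 := by
  rw [coordWeight, hz, abs_zero, zero_div, zero_smul]

theorem hasCompactSupport_coordWeight {h : Spacetime m → F} (hs : HasCompactSupport h)
    (i : Fin (m + 1)) : HasCompactSupport (coordWeight i h) :=
  hs.mono (Function.support_smul_subset_right (fun z : Spacetime m => |z i| / ‖z‖) h)

theorem continuous_coordWeight {h : Spacetime m → F} (hc : Continuous h) (h0 : 0 ∉ tsupport h)
    (i : Fin (m + 1)) : Continuous (coordWeight i h) := by
  refine ContinuousOn.continuous_of_tsupport_subset (s := {0}ᶜ) ?_ isOpen_compl_singleton ?_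
  · exact ((by fun_prop : Continuous fun z : Spacetime m => |z i|).continuousOn.div
      continuous_norm.continuousOn fun z hz => norm_ne_zero_iff.2 hz).smul hc.continuousOn
  · exact (tsupport_smul_subset_right (fun z : Spacetime m => |z i| / ‖z‖) h).trans
      (Set.subset_compl_singleton_iff.2 h0)

theorem sum_smul_coordWeight (h : Spacetime m → F) (z : Spacetime m) :
    ∑ i, |z i| • coordWeight i h z = ‖z‖ • h z := by
  have hsq : ∑ i, z i * z i = ‖z‖ * ‖z‖ := by
    simp only [← pow_two, EuclideanSpace.real_norm_sq_eq]
  simp only [coordWeight, smul_smul, ← Finset.sum_smul, ← mul_div_assoc, abs_mul_abs_self,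
    ← Finset.sum_div]
  rw [hsq, mul_self_div_self]

theorem integral_levelMeasure_coord (i : Fin (m + 1)) {k : Spacetime m → F} (hkc : Continuous k)
    (hk : HasCompactSupport k) (hk0 : ∀ z, z i = 0 → k z = 0) (s : ℝ) :
    Integrable (fun z => (|z i| / ‖z‖) • k z) (levelMeasure m s) ∧
      ∫ z, (|z i| / ‖z‖) • k z ∂levelMeasure m s = hausdorffFactor m •
        ((∫ y, k (levelChart i 1 (s, y))) + ∫ y, k (levelChart i (-1) (s, y))) := by
  have hmeas (σ : ℝ) : MeasurableSet {z : Spacetime m | 0 < σ * z i} :=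
    measurableSet_lt measurable_const (by fun_prop)
  have hinter (σ : ℝ) : {z : Spacetime m | 0 < σ * z i} ∩ {z | waveSymbol z = s ∧ z ≠ 0} =
      {z | waveSymbol z = s ∧ 0 < σ * z i} := by
    ext z
    refine ⟨fun h => ⟨h.2.1, h.1⟩, fun h => ⟨h.2, h.1, ?_⟩⟩
    rintro rfl
    simpa using h.2
  have hsign (σ : ℝ) (hσ : σ * σ = 1) :
      Integrable ({z | 0 < σ * z i}.indicator fun z => (|z i| / ‖z‖) • k z) (levelMeasure m s) ∧
      ∫ z, {z | 0 < σ * z i}.indicator (fun z => (|z i| / ‖z‖) • k z) z ∂levelMeasure m s =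
        hausdorffFactor m • ∫ y, k (levelChart i σ (s, y)) := by
    rw [integrable_indicator_iff (hmeas σ), integral_indicator (hmeas σ), levelMeasure,
      IntegrableOn, Measure.restrict_restrict (hmeas σ), hinter]
    exact integral_levelSet_sign hkc hk hk0 hσ s
  have hsplit : (fun z => (|z i| / ‖z‖) • k z) =
      {z | 0 < 1 * z i}.indicator (fun z => (|z i| / ‖z‖) • k z) +
        {z | 0 < -1 * z i}.indicator fun z => (|z i| / ‖z‖) • k z := by
    ext z
    simp only [Pi.add_apply, Set.indicator_apply, Set.mem_ofPred_eq, one_mul, neg_one_mul,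
      Left.neg_pos_iff]
    rcases lt_trichotomy (z i) 0 with hi | hi | hi
    · simp [hi, hi.le]
    · simp [hi, hk0 z hi]
    · simp [hi, hi.le]
  obtain ⟨hint_pos, heq_pos⟩ := hsign 1 (one_mul 1)
  obtain ⟨hint_neg, heq_neg⟩ := hsign (-1) ((by norm_num))
  rw [hsplit]
  refine ⟨hint_pos.add hint_neg, ?_⟩
  rw [integral_add' hint_pos hint_neg, heq_pos, heq_neg, smul_add]

theorem integral_levelMeasure {h : Spacetime m → F} (hc : Continuous h) (hs : HasCompactSupport h)
    (h0 : 0 ∉ tsupport h) (s : ℝ) :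
    ∫ z, h z ∂levelMeasure m s = hausdorffFactor m • ∑ i,
      ((∫ y, coordWeight i h (levelChart i 1 (s, y))) +
        ∫ y, coordWeight i h (levelChart i (-1) (s, y))) := by
  have hpartition (z : Spacetime m) : h z = ∑ i, (|z i| / ‖z‖) • coordWeight i h z := by
    rcases eq_or_ne z 0 with rfl | hz
    · simp [coordWeight, image_eq_zero_of_notMem_tsupport h0]
    · simp only [div_eq_inv_mul, ← smul_smul, ← Finset.smul_sum, sum_smul_coordWeight,
        inv_smul_smul₀ (norm_ne_zero_iff.2 hz)]
  have hcoord (i : Fin (m + 1)) := integral_levelMeasure_coord i (continuous_coordWeight hc h0 i)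
    (hasCompactSupport_coordWeight hs i) (fun _ => coordWeight_eq_zero i h) s
  rw [integral_congr_ae (.of_forall hpartition), integral_finsetSum _ fun i _ => (hcoord i).1,
    Finset.smul_sum]
  exact Finset.sum_congr rfl fun i _ => (hcoord i).2

theorem continuous_integral_levelChart {i : Fin (m + 1)} {k : Spacetime m → F} {σ : ℝ}
    (hσ : σ * σ = 1) (hkc : Continuous k) (hk : HasCompactSupport k)
    (hk0 : ∀ z, z i = 0 → k z = 0) : Continuous fun s => ∫ y, k (levelChart i σ (s, y)) := by
  have hsupp := hasCompactSupport_comp_levelChart hσ hk hk0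
  refine continuousOn_univ.1 (continuousOn_integral_of_compact_support
    (hsupp.isCompact.image continuous_snd)
    (hkc.comp (continuous_levelChart i σ)).continuousOn fun s y _ hy => ?_)
  contrapose! hy
  exact ⟨(s, y), subset_tsupport _ hy, rfl⟩

theorem continuous_integral_levelMeasure {h : Spacetime m → F} (hc : Continuous h)
    (hs : HasCompactSupport h) (h0 : 0 ∉ tsupport h) :
    Continuous fun s => ∫ z, h z ∂levelMeasure m s := by
  have hchart (i : Fin (m + 1)) (σ : ℝ) (hσ : σ * σ = 1) :=
    continuous_integral_levelChart hσ (continuous_coordWeight hc h0 i)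
      (hasCompactSupport_coordWeight hs i) fun _ => coordWeight_eq_zero i h
  simp_rw [integral_levelMeasure hc hs h0]
  exact (continuous_finsetSum _ fun i _ => (hchart i 1 (one_mul 1)).add
    (hchart i (-1) (by norm_num))).const_smul _

theorem integrable_integral_levelMeasure {h : Spacetime m → F} (hc : Continuous h)
    (hs : HasCompactSupport h) (h0 : 0 ∉ tsupport h) :
    Integrable fun s => ∫ z, h z ∂levelMeasure m s := by
  have hchart (i : Fin (m + 1)) (σ : ℝ) (hσ : σ * σ = 1) :=
    (integrable_comp_levelChart hσ (continuous_coordWeight hc h0 i)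
      (hasCompactSupport_coordWeight hs i) fun _ => coordWeight_eq_zero i h).integral_prod_left
  simp_rw [integral_levelMeasure hc hs h0]
  exact (integrable_finsetSum _ fun i _ => (hchart i 1 (one_mul 1)).add
    (hchart i (-1) (by norm_num))).smul _

theorem integral_comp_sqrt {Φ : ℝ → F} (h0 : Φ 0 = 0) :
    ∫ v, Φ √v = ∫ r in Set.Ioi (0 : ℝ), (2 * r) • Φ r := by
  have hIoi : ∫ v in Set.Ioi (0 : ℝ), Φ √v = ∫ v, Φ √v :=
    setIntegral_eq_integral_of_forall_compl_eq_zero fun v hv => by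
      rw [Real.sqrt_eq_zero_of_nonpos (not_lt.1 hv), h0]
  rw [← hIoi, ← integral_comp_rpow_Ioi (fun v => Φ √v) two_ne_zero]
  refine setIntegral_congr_fun measurableSet_Ioi fun r hr => ?_
  simp only [Real.rpow_two, Real.sqrt_sq (le_of_lt hr)]
  norm_num

theorem integral_comp_heightOver (i : Fin (m + 1)) (σ : ℝ) (y : EuclideanSpace ℝ (Fin m))
    {Φ : ℝ → F} (h0 : Φ 0 = 0) :
    ∫ s, Φ (heightOver i σ s y) = ∫ r in Set.Ioi (0 : ℝ), (2 * r) • Φ (σ * r) := by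
  rw [← integral_comp_sqrt (Φ := fun r => Φ (σ * r)) (by rwa [mul_zero])]
  simp only [heightOver]
  rw [integral_sub_right_eq_self (fun s => Φ (σ * √(signature m i * s))) (restSymbol i y)]
  rcases signature_eq_or (m := m) i with hi | hi
  · simp only [hi, one_mul]
  · simp only [hi, neg_one_mul]
    exact integral_neg_eq_self (fun s => Φ (σ * √s)) volume

theorem measurePreserving_insertCoord (i : Fin (m + 1)) :
    MeasurePreserving (insertCoord i) (volume.prod volume) volume := by
  have htoPi := (MeasurePreserving.id (volume : Measure ℝ)).prod
    (EuclideanSpace.volume_preserving_symm_measurableEquiv_toLp (Fin m))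
  have hinsert := (volume_preserving_piFinSuccAbove (fun _ : Fin (m + 1) => ℝ) i).symm
  exact (PiLp.volume_preserving_toLp (Fin (m + 1))).comp (hinsert.comp htoPi)

theorem integral_insertCoord (i : Fin (m + 1)) {f : Spacetime m → F} (hf : Integrable f) :
    ∫ y, ∫ r, f (insertCoord i (r, y)) = ∫ z, f z := by
  have hemb := (insertCoord (m := m) i).toHomeomorph.measurableEmbedding
  have hmp := measurePreserving_insertCoord (m := m) i
  rw [← hmp.integral_comp hemb]
  exact (integral_prod_symm _ ((hmp.integrable_comp_emb hemb).2 hf)).symm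

theorem integral_integral_levelChart_add (i : Fin (m + 1)) {k : Spacetime m → F}
    (hkc : Continuous k) (hk : HasCompactSupport k) (hk0 : ∀ z, z i = 0 → k z = 0) :
    ∫ s, ((∫ y, k (levelChart i 1 (s, y))) + ∫ y, k (levelChart i (-1) (s, y))) =
      ∫ z, (2 * |z i|) • k z := by
  set f : Spacetime m → F := fun z => (2 * |z i|) • k z
  have hfc : Continuous f := Continuous.smul (by fun_prop) hkc
  have hfs : HasCompactSupport f :=
    hk.mono (Function.support_smul_subset_right (fun z : Spacetime m => 2 * |z i|) k)
  have hline (y : EuclideanSpace ℝ (Fin m)) : Integrable fun r => f (insertCoord i (r, y)) :=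
    (hfc.comp ((insertCoord i).continuous.comp
      (Continuous.prodMk_left y))).integrable_of_hasCompactSupport
      (hasCompactSupport_slice (hfs.comp_homeomorph (insertCoord i).toHomeomorph) y)
  have hsubst {σ : ℝ} (hσ : |σ| = 1) (y : EuclideanSpace ℝ (Fin m)) :
      ∫ s, k (levelChart i σ (s, y)) = ∫ r in Set.Ioi (0 : ℝ), f (insertCoord i (σ * r, y)) := by
    refine (integral_comp_heightOver i σ y (Φ := fun r => k (insertCoord i (r, y)))
      (hk0 _ (insertCoord_apply_same i 0 y))).trans ?_
    refine setIntegral_congr_fun measurableSet_Ioi fun r hr => ?_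
    simp only [f, insertCoord_apply_same, abs_mul, hσ, one_mul, abs_of_pos (Set.mem_Ioi.1 hr)]
  have hswap {σ : ℝ} (hσ : |σ| = 1) :
      Integrable (fun s => ∫ y, k (levelChart i σ (s, y))) ∧
      Integrable (fun y => ∫ r in Set.Ioi (0 : ℝ), f (insertCoord i (σ * r, y))) ∧
      ∫ s, ∫ y, k (levelChart i σ (s, y)) =
        ∫ y, ∫ r in Set.Ioi (0 : ℝ), f (insertCoord i (σ * r, y)) := by
    have hint := integrable_comp_levelChart (by rw [← abs_mul_abs_self, hσ, one_mul]) hkc hk hk0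
    simp_rw [← hsubst hσ]
    exact ⟨hint.integral_prod_left, hint.integral_prod_right, integral_integral_swap hint⟩
  obtain ⟨hs_pos, hy_pos, heq_pos⟩ := hswap abs_one
  obtain ⟨hs_neg, hy_neg, heq_neg⟩ := hswap (σ := -1) (by norm_num)
  rw [integral_add hs_pos hs_neg, heq_pos, heq_neg, ← integral_add hy_pos hy_neg,
    ← integral_insertCoord i (hfc.integrable_of_hasCompactSupport hfs)]
  refine integral_congr_ae (.of_forall fun y => ?_)
  simp only [one_mul, neg_one_mul]
  rw [integral_comp_neg_Ioi (f := fun r => f (insertCoord i (r, y))), neg_zero, add_comm,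
    intervalIntegral.integral_Iic_add_Ioi (hline y).integrableOn (hline y).integrableOn]

theorem integral_integral_levelMeasure {h : Spacetime m → F} (hc : Continuous h)
    (hs : HasCompactSupport h) (h0 : 0 ∉ tsupport h) :
    ∫ s, ∫ z, h z ∂levelMeasure m s = hausdorffFactor m • ∫ z, (2 * ‖z‖) • h z := by
  have hkc := continuous_coordWeight hc h0
  have hks := hasCompactSupport_coordWeight hs
  have hchart (i : Fin (m + 1)) (σ : ℝ) (hσ : σ * σ = 1) :=
    (integrable_comp_levelChart hσ (hkc i) (hks i)
      fun _ => coordWeight_eq_zero i h).integral_prod_left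
  have hweight (i : Fin (m + 1)) : Integrable fun z => (2 * |z i|) • coordWeight i h z :=
    (Continuous.smul (by fun_prop) (hkc i)).integrable_of_hasCompactSupport ((hks i).mono
      (Function.support_smul_subset_right (fun z : Spacetime m => 2 * |z i|) (coordWeight i h)))
  simp_rw [integral_levelMeasure hc hs h0, NNReal.smul_def]
  rw [integral_smul]
  congr 1
  refine (integral_finsetSum _ fun i _ =>
    (hchart i 1 (one_mul 1)).add (hchart i (-1) (by norm_num))).trans ?_
  refine (Finset.sum_congr rfl fun i _ => integral_integral_levelChart_add i (hkc i) (hks i)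
    fun _ => coordWeight_eq_zero i h).trans ?_
  rw [← integral_finsetSum _ fun i _ => hweight i]
  simp_rw [← smul_smul, ← Finset.smul_sum, sum_smul_coordWeight]

end Coarea

section FrequencyIntegral

variable {m k : ℕ}

theorem exists_pos_norm_bounds {E : Type*} [NormedAddCommGroup E] {s : Set E} (hs : IsCompact s)
    (h0 : 0 ∉ s) : ∃ r R : ℝ, 0 < r ∧ r ≤ R ∧ ∀ z ∈ s, r ≤ ‖z‖ ∧ ‖z‖ ≤ R := by
  obtain ⟨r, hr, hball⟩ := Metric.isOpen_iff.1 hs.isClosed.isOpen_compl 0 h0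
  obtain ⟨R, hR⟩ := hs.isBounded.exists_norm_le
  refine ⟨r, max r R, hr, le_max_left r R, fun z hz => ⟨not_lt.1 fun hzr => ?_,
    (hR z hz).trans (le_max_right r R)⟩⟩
  exact hball (mem_ball_zero_iff.2 hzr) hz

theorem continuous_oscIntegral {a : Spacetime m → ℂ} (ha : Integrable a) (w : Spacetime m) :
    Continuous (oscIntegral a w) := by
  have hg : Continuous (waveSymbol : Spacetime m → ℝ) := continuous_waveSymbol
  refine continuous_of_dominated (bound := fun z => ‖a z‖) (fun l => ?_) (fun l => ?_) ha.norm ?_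
  · exact Continuous.aestronglyMeasurable (by fun_prop) |>.smul ha.1
  · exact Eventually.of_forall fun z => (Circle.norm_smul _ _).le
  · exact Eventually.of_forall fun z => by fun_prop

theorem exists_norm_pow_smul_oscIntegral_le {a : Spacetime m → ℂ} (ha : ContDiff ℝ ∞ a)
    (hsupp : HasCompactSupport a) {r R : ℝ} (hr : 0 < r) (hR : 0 < R)
    (hrR : ∀ z ∈ tsupport a, r ≤ ‖z‖ ∧ ‖z‖ ≤ R) (k N : ℕ) :
    ∃ C, 0 ≤ C ∧ ∀ (w : Spacetime m) (l : ℝ), (4 * R * |l| ≤ ‖w‖ ∨ ‖w‖ ≤ r * |l|) →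
      ‖l ^ k • oscIntegral a w l‖ ≤ C * ((1 + ‖w‖) ^ N)⁻¹ * (1 + l ^ 2)⁻¹ := by
  obtain ⟨C, hC⟩ := exists_one_add_norm_pow_mul_norm_oscIntegral_le ha hsupp hr hR hrR (N + k + 2)
  refine ⟨|C|, abs_nonneg C, fun w l hwl => ?_⟩
  rw [norm_smul, norm_pow, norm_eq_abs, ← div_eq_mul_inv, ← div_eq_mul_inv, div_div,
    le_div_iff₀ (by positivity)]
  have hw : ‖w‖ ≤ ‖(w, l)‖ := norm_fst_le (w, l)
  have hl : |l| ≤ ‖(w, l)‖ := norm_snd_le (w, l)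
  have hk : |l| ^ k ≤ (1 + ‖(w, l)‖) ^ k := by gcongr; linarith
  have hsq : 1 + l ^ 2 ≤ (1 + ‖(w, l)‖) ^ 2 := by
    rw [← sq_abs]
    nlinarith [abs_nonneg l]
  calc |l| ^ k * ‖oscIntegral a w l‖ * ((1 + ‖w‖) ^ N * (1 + l ^ 2))
      = (1 + ‖w‖) ^ N * |l| ^ k * (1 + l ^ 2) * ‖oscIntegral a w l‖ := by ring
    _ ≤ (1 + ‖(w, l)‖) ^ N * (1 + ‖(w, l)‖) ^ k * (1 + ‖(w, l)‖) ^ 2 * ‖oscIntegral a w l‖ := by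
        gcongr
    _ = (1 + ‖(w, l)‖) ^ (N + k + 2) * ‖oscIntegral a w l‖ := by rw [pow_add, pow_add]
    _ ≤ |C| := (hC w l hwl).trans (le_abs_self C)

theorem integrable_pow_smul_oscIntegral {a : Spacetime m → ℂ} (ha : ContDiff ℝ ∞ a)
    (hsupp : HasCompactSupport a) (h0 : 0 ∉ tsupport a) (w : Spacetime m) (k : ℕ) :
    Integrable fun l : ℝ => l ^ k • oscIntegral a w l := by
  obtain ⟨r, R, hr, hrR, hbounds⟩ := exists_pos_norm_bounds hsupp h0
  obtain ⟨C, -, hC⟩ :=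
    exists_norm_pow_smul_oscIntegral_le ha hsupp hr (hr.trans_le hrR) hbounds k 0
  have hcont : Continuous fun l : ℝ => l ^ k • oscIntegral a w l :=
    (continuous_pow k).smul
      (continuous_oscIntegral (ha.continuous.integrable_of_hasCompactSupport hsupp) w)
  refine hcont.locallyIntegrable.integrable_of_isBigO_cocompact (g := fun l => (1 + l ^ 2)⁻¹)
    (.of_bound C ?_) (integrable_inv_one_add_sq.integrableAtFilter _)
  filter_upwards [tendsto_norm_cocompact_atTop.eventually_ge_atTop (‖w‖ / r)] with l hl
  have hwl : ‖w‖ ≤ r * |l| := (div_le_iff₀' hr).1 hl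
  simpa [abs_of_nonneg (add_nonneg zero_le_one (sq_nonneg l))] using hC w l (.inr hwl)

theorem one_add_norm_pow_inv_le (w : Spacetime m) {β : ℝ} (hβ : -(m : ℝ) ≤ β) :
    ((1 + ‖w‖) ^ m)⁻¹ ≤ (1 + |timeCoord w|) ^ β := by
  have ht : |timeCoord w| ≤ ‖w‖ := abs_timeCoord_le w
  calc ((1 + ‖w‖) ^ m)⁻¹ ≤ ((1 + |timeCoord w|) ^ m)⁻¹ := by gcongr
    _ = (1 + |timeCoord w|) ^ (-(m : ℝ)) := by rw [rpow_neg (by positivity), rpow_natCast]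
    _ ≤ (1 + |timeCoord w|) ^ β := rpow_le_rpow_of_exponent_le (by simp) hβ

theorem exists_norm_integral_stationary_le (hk : 2 * k ≤ m) (a : SchwartzMap (Spacetime m) ℂ)
    {c d : ℝ} (hc : 0 < c) (hcd : c ≤ d) : ∃ C, 0 ≤ C ∧ ∀ (w : Spacetime m) (s : ℝ),
      ‖∫ l in (c * ‖w‖)..(d * ‖w‖), 𝐞 (-(s * l)) • (l ^ k : ℝ) • oscIntegral a w l‖ ≤
        C * (1 + |timeCoord w|) ^ (k - ((m + 1 : ℕ) : ℝ) / 2 + 1) := by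
  obtain ⟨C, hC0, hC⟩ := exists_norm_integral_pow_smul_oscIntegral_le hk a hc hcd
  set β := k - ((m + 1 : ℕ) : ℝ) / 2 + 1
  have hd : 0 < d := hc.trans_le hcd
  set A := ∫ z, ‖a z‖
  have : 0 ≤ A := integral_nonneg fun z => norm_nonneg _
  refine ⟨C + d ^ k * A * d * 2 ^ |β|, by positivity, fun w s => ?_⟩
  rcases le_total 1 ‖w‖ with hw | hw
  · exact (hC w s hw).trans (by gcongr; exact le_add_of_nonneg_right (by positivity))
  have hbound : ∀ l ∈ Set.uIoc (c * ‖w‖) (d * ‖w‖),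
      ‖𝐞 (-(s * l)) • (l ^ k : ℝ) • oscIntegral a w l‖ ≤ d ^ k * A := by
    intro l hl
    rw [Set.uIoc_of_le (by gcongr)] at hl
    have hl0 : 0 ≤ l := (by positivity : 0 ≤ c * ‖w‖).trans hl.1.le
    have hld : l ≤ d := hl.2.trans (mul_le_of_le_one_right hd.le hw)
    rw [Circle.norm_smul, norm_smul, norm_of_nonneg (pow_nonneg hl0 k)]
    gcongr
    exact norm_oscIntegral_le a w l
  have hone : 1 ≤ 2 ^ |β| * (1 + |timeCoord w|) ^ β := by
    have ht : |timeCoord w| ≤ 1 := (abs_timeCoord_le w).trans hw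
    simpa using rpow_le_rpow_abs_mul_rpow one_pos (by positivity : 0 < 1 + |timeCoord w|)
      (K := 2) (by linarith [abs_nonneg (timeCoord w)]) (by linarith) β
  have hlength : |d * ‖w‖ - c * ‖w‖| ≤ d := by
    rw [← sub_mul, abs_of_nonneg (mul_nonneg (sub_nonneg.2 hcd) (norm_nonneg w))]
    nlinarith [norm_nonneg w]
  calc ‖∫ l in (c * ‖w‖)..(d * ‖w‖), 𝐞 (-(s * l)) • (l ^ k : ℝ) • oscIntegral a w l‖
      ≤ d ^ k * A * |d * ‖w‖ - c * ‖w‖| := intervalIntegral.norm_integral_le_of_norm_le_const hbound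
    _ ≤ d ^ k * A * d * 1 := by rw [mul_one]; gcongr
    _ ≤ d ^ k * A * d * (2 ^ |β| * (1 + |timeCoord w|) ^ β) := by gcongr
    _ ≤ _ := by rw [add_mul, ← mul_assoc]; exact le_add_of_nonneg_left (by positivity)

theorem exists_norm_integral_nonstationary_le {a : Spacetime m → ℂ} (ha : ContDiff ℝ ∞ a)
    (hsupp : HasCompactSupport a) {r R : ℝ} (hr : 0 < r) (hR : 0 < R)
    (hrR : ∀ z ∈ tsupport a, r ≤ ‖z‖ ∧ ‖z‖ ≤ R) (k : ℕ) {β : ℝ} (hβ : -(m : ℝ) ≤ β) :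
    ∃ C, 0 ≤ C ∧ ∀ (w : Spacetime m) (s : ℝ) (T : Set ℝ), MeasurableSet T →
      (∀ l ∈ T, 4 * R * |l| ≤ ‖w‖ ∨ ‖w‖ ≤ r * |l|) →
      ‖∫ l in T, 𝐞 (-(s * l)) • (l ^ k : ℝ) • oscIntegral a w l‖ ≤
        C * (1 + |timeCoord w|) ^ β := by
  obtain ⟨C, hC0, hC⟩ := exists_norm_pow_smul_oscIntegral_le ha hsupp hr hR hrR k m
  refine ⟨C * π, by positivity, fun w s T hT hnonstat => ?_⟩
  have hbound : ∀ l ∈ T, ‖𝐞 (-(s * l)) • (l ^ k : ℝ) • oscIntegral a w l‖ ≤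
      C * (1 + |timeCoord w|) ^ β * (1 + l ^ 2)⁻¹ := by
    intro l hl
    rw [Circle.norm_smul]
    refine (hC w l (hnonstat l hl)).trans ?_
    gcongr
    exact one_add_norm_pow_inv_le w hβ
  have hint : Integrable fun l : ℝ => C * (1 + |timeCoord w|) ^ β * (1 + l ^ 2)⁻¹ :=
    integrable_inv_one_add_sq.const_mul _
  calc ‖∫ l in T, 𝐞 (-(s * l)) • (l ^ k : ℝ) • oscIntegral a w l‖
      ≤ ∫ l in T, C * (1 + |timeCoord w|) ^ β * (1 + l ^ 2)⁻¹ :=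
        norm_integral_le_of_norm_le hint.integrableOn (ae_restrict_of_forall_mem hT hbound)
    _ ≤ ∫ l, C * (1 + |timeCoord w|) ^ β * (1 + l ^ 2)⁻¹ :=
        setIntegral_le_integral hint (.of_forall fun l => by positivity)
    _ = C * π * (1 + |timeCoord w|) ^ β := by
        rw [integral_const_mul, integral_univ_inv_one_add_sq]
        ring

theorem exists_norm_integral_Ioi_pow_smul_oscIntegral_le (hk : 2 * k ≤ m)
    (a : SchwartzMap (Spacetime m) ℂ) (hsupp : HasCompactSupport a) (h0 : 0 ∉ tsupport a) :
    ∃ C, 0 ≤ C ∧ ∀ (w : Spacetime m) (s : ℝ),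
      ‖∫ l in Set.Ioi 0, 𝐞 (-(s * l)) • (l ^ k : ℝ) • oscIntegral a w l‖ ≤
        C * (1 + |timeCoord w|) ^ (k - ((m + 1 : ℕ) : ℝ) / 2 + 1) := by
  obtain ⟨r, R, hr, hrR, hbounds⟩ := exists_pos_norm_bounds hsupp h0
  have hR : 0 < R := hr.trans_le hrR
  obtain ⟨C₁, hC₁, hstat⟩ := exists_norm_integral_stationary_le hk a
    (by positivity : 0 < (4 * R)⁻¹) (by gcongr; linarith : (4 * R)⁻¹ ≤ r⁻¹)
  have hβ : -(m : ℝ) ≤ k - ((m + 1 : ℕ) : ℝ) / 2 + 1 := by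
    push_cast
    linarith [(Nat.cast_nonneg m : (0 : ℝ) ≤ m)]
  obtain ⟨C₂, hC₂, hnonstat⟩ :=
    exists_norm_integral_nonstationary_le (a.smooth ⊤) hsupp hr hR hbounds k hβ
  refine ⟨C₁ + C₂, by positivity, fun w s => ?_⟩
  set S := Set.Ioc ((4 * R)⁻¹ * ‖w‖) (r⁻¹ * ‖w‖)
  have hS : Set.Ioi 0 ∩ S = S := Set.inter_eq_right.2 fun l hl =>
    (by positivity : 0 ≤ (4 * R)⁻¹ * ‖w‖).trans_lt hl.1
  have hcompl : ∀ l ∈ Set.Ioi 0 \ S, 4 * R * |l| ≤ ‖w‖ ∨ ‖w‖ ≤ r * |l| := by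
    rintro l ⟨hl : 0 < l, hlS⟩
    rw [abs_of_pos hl, ← le_inv_mul_iff₀ (by positivity), ← inv_mul_le_iff₀ hr]
    exact (le_or_gt l _).imp_right fun h => (not_le.1 fun h' => hlS ⟨h, h'⟩).le
  have hint : Integrable fun l => 𝐞 (-(s * l)) • (l ^ k : ℝ) • oscIntegral a w l :=
    (Real.fourierIntegral_convergent_iff s).2
      (integrable_pow_smul_oscIntegral (a.smooth ⊤) hsupp h0 w k)
  rw [← integral_inter_add_sdiff measurableSet_Ioc hint.integrableOn, hS,
    ← intervalIntegral.integral_of_le (by gcongr; linarith), add_mul]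
  exact (norm_add_le _ _).trans (add_le_add (hstat w s)
    (hnonstat w s _ (measurableSet_Ioi.diff measurableSet_Ioc) hcompl))

theorem star_oscIntegral (a : Spacetime m → ℂ) (w : Spacetime m) (l : ℝ) :
    star (oscIntegral a w l) = oscIntegral (star a) (-w) (-l) := by
  rw [oscIntegral, oscIntegral, RCLike.star_def, ← integral_conj]
  congr 1 with z
  rw [Circle.smul_def, Circle.smul_def, smul_eq_mul, smul_eq_mul, map_mul,
    ← Circle.coe_inv_eq_conj, ← AddChar.map_neg_eq_inv, inner_neg_right, neg_mul, neg_add]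
  rfl

theorem exists_norm_integral_pow_smul_oscIntegral_le_of_isSelfAdjoint (hk : 2 * k ≤ m)
    (a : SchwartzMap (Spacetime m) ℂ) (hsupp : HasCompactSupport a) (h0 : 0 ∉ tsupport a)
    (hreal : IsSelfAdjoint (a : Spacetime m → ℂ)) : ∃ C, 0 ≤ C ∧ ∀ (w : Spacetime m) (s : ℝ),
      ‖∫ l, 𝐞 (-(s * l)) • (l ^ k : ℝ) • oscIntegral a w l‖ ≤
        C * (1 + |timeCoord w|) ^ (k - ((m + 1 : ℕ) : ℝ) / 2 + 1) := by
  obtain ⟨C, hC0, hC⟩ := exists_norm_integral_Ioi_pow_smul_oscIntegral_le hk a hsupp h0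
  refine ⟨2 * C, by positivity, fun w s => ?_⟩
  set f := fun (w : Spacetime m) (l : ℝ) => 𝐞 (-(s * l)) • (l ^ k : ℝ) • oscIntegral a w l
  have hf : Integrable (f w) := (Real.fourierIntegral_convergent_iff s).2
    (integrable_pow_smul_oscIntegral (a.smooth ⊤) hsupp h0 w k)
  have hstar (l : ℝ) : f w (-l) = (-1) ^ k * star (f (-w) l) := by
    simp only [f, Circle.smul_def, Complex.real_smul, smul_eq_mul, star_mul', star_oscIntegral,
      hreal.star_eq, neg_neg, RCLike.star_def, ← Circle.coe_inv_eq_conj, Complex.conj_ofReal,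
      ← AddChar.map_neg_eq_inv, mul_neg, neg_pow l k]
    push_cast
    ring
  have hneg : ‖∫ l in Set.Iic 0, f w l‖ = ‖∫ l in Set.Ioi 0, f (-w) l‖ := by
    rw [← neg_zero, ← integral_comp_neg_Ioi, neg_zero]
    simp only [hstar, RCLike.star_def]
    rw [integral_const_mul, integral_conj, norm_mul, norm_pow, norm_neg, norm_one, one_pow,
      one_mul, RCLike.norm_conj]
  rw [← intervalIntegral.integral_Iic_add_Ioi (b := 0) hf.integrableOn hf.integrableOn]
  have hCneg := hC (-w) s
  rw [show timeCoord (-w) = -timeCoord w from rfl, abs_neg] at hCneg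
  refine (norm_add_le _ _).trans ?_
  rw [hneg]
  linarith [hC w s]

end FrequencyIntegral

section FourierInLevel

variable {m : ℕ} {η : Spacetime m → ℝ}

theorem ae_levelMeasure_waveSymbol_eq (m : ℕ) (s : ℝ) :
    ∀ᵐ z ∂levelMeasure m s, waveSymbol z = s := by
  have hmeas : MeasurableSet {z : Spacetime m | waveSymbol z = s ∧ z ≠ 0} :=
    (isClosed_eq continuous_waveSymbol continuous_const).measurableSet.inter
      isOpen_ne.measurableSet
  exact (ae_restrict_mem hmeas).mono fun z hz => hz.1

theorem fourierInv_integral_levelMeasure {F : Type*} [NormedAddCommGroup F] [NormedSpace ℂ F]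
    {h : Spacetime m → F} (hc : Continuous h)
    (hs : HasCompactSupport h) (h0 : 0 ∉ tsupport h) (l : ℝ) :
    𝓕⁻ (fun s => ∫ z, h z ∂levelMeasure m s) l =
      hausdorffFactor m • ∫ z, (2 * ‖z‖) • 𝐞 (l * waveSymbol z) • h z := by
  have hg : Continuous (waveSymbol : Spacetime m → ℝ) := continuous_waveSymbol
  set k := fun z => 𝐞 (l * waveSymbol z) • h z
  have hkc : Continuous k := by fun_prop
  have hsub : Function.support k ⊆ Function.support h :=
    Function.support_smul_subset_right (fun z => 𝐞 (l * waveSymbol z)) h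
  rw [← integral_integral_levelMeasure hkc (hs.mono hsub) fun hk => h0 (closure_mono hsub hk)]
  rw [Real.fourierInv_eq]
  refine integral_congr_ae (.of_forall fun s => ?_)
  simp only [Circle.smul_def]
  rw [← integral_smul]
  refine integral_congr_ae ((ae_levelMeasure_waveSymbol_eq m s).mono fun z hz => ?_)
  simp only [k, hz, Circle.smul_def]
  rfl

/-- The amplitude `2 ‖z‖ η(z)` obtained from `η σ_s` by the coarea formula, `2 ‖z‖`
being the length of the gradient of `waveSymbol`. -/
def coareaAmplitude (η : Spacetime m → ℝ) (z : Spacetime m) : ℂ := ((2 * ‖z‖ * η z : ℝ) : ℂ)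

theorem tsupport_coareaAmplitude_subset (η : Spacetime m → ℝ) :
    tsupport (coareaAmplitude η) ⊆ tsupport η :=
  closure_mono fun z hz hη => hz (by rw [coareaAmplitude, hη, mul_zero, Complex.ofReal_zero])

theorem hasCompactSupport_coareaAmplitude (hs : HasCompactSupport η) :
    HasCompactSupport (coareaAmplitude η) :=
  hs.of_isClosed_subset (isClosed_tsupport _) (tsupport_coareaAmplitude_subset η)

theorem contDiff_coareaAmplitude (hη : ContDiff ℝ ∞ η) (h0 : 0 ∉ tsupport η) :
    ContDiff ℝ ∞ (coareaAmplitude η) := by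
  refine contDiff_of_contDiffAt_tsupport fun z hz => ?_
  have hz0 : z ≠ 0 := fun h => h0 (h ▸ tsupport_coareaAmplitude_subset η hz)
  exact Complex.ofRealCLM.contDiff.contDiffAt.comp z
    ((contDiffAt_const.mul (contDiffAt_norm ℝ hz0)).mul hη.contDiffAt)

theorem isSelfAdjoint_coareaAmplitude (η : Spacetime m → ℝ) :
    IsSelfAdjoint (coareaAmplitude η) :=
  funext fun _ => Complex.conj_ofReal _

/-- The inverse Fourier transform in `s`, at frequency `l`, of `s ↦ sigmaCheck η s w`. -/
def levelFrequency (η : Spacetime m → ℝ) (w : Spacetime m) (l : ℝ) : ℂ :=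
  hausdorffFactor m • oscIntegral (coareaAmplitude η) w l

theorem integrable_pow_smul_levelFrequency (hη : ContDiff ℝ ∞ η) (hs : HasCompactSupport η)
    (h0 : 0 ∉ tsupport η) (w : Spacetime m) (k : ℕ) :
    Integrable fun l : ℝ => l ^ k • levelFrequency η w l := by
  have hint := integrable_pow_smul_oscIntegral (contDiff_coareaAmplitude hη h0)
    (hasCompactSupport_coareaAmplitude hs)
    (fun h => h0 (tsupport_coareaAmplitude_subset η h)) w k
  exact (hint.smul (hausdorffFactor m : ℝ)).congr
    (.of_forall fun l => smul_comm (hausdorffFactor m : ℝ) (l ^ k) _)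

theorem sigmaCheck_eq (η : Spacetime m → ℝ) (s : ℝ) (w : Spacetime m) :
    sigmaCheck η s w = ∫ z, 𝐞 ⟪z, w⟫ • (η z : ℂ) ∂levelMeasure m s := by
  refine integral_congr_ae (.of_forall fun z => ?_)
  simp only [Circle.smul_def, Real.fourierChar_apply, smul_eq_mul]
  push_cast
  ring_nf

theorem sigmaCheck_eq_fourier (hη : ContDiff ℝ ∞ η) (hs : HasCompactSupport η)
    (h0 : 0 ∉ tsupport η) (w : Spacetime m) :
    (fun s => sigmaCheck η s w) = 𝓕 (levelFrequency η w) := by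
  set h := fun z => 𝐞 ⟪z, w⟫ • (η z : ℂ)
  set f := fun s => ∫ z, h z ∂levelMeasure m s
  have hsub : Function.support h ⊆ Function.support η := fun z hz hηz =>
    hz (by simp only [h, hηz, Complex.ofReal_zero, smul_zero])
  have hc : Continuous h := by
    have := hη.continuous
    fun_prop
  have hhs : HasCompactSupport h := hs.mono hsub
  have hh0 : 0 ∉ tsupport h := fun hz => h0 (closure_mono hsub hz)
  have hinv : 𝓕⁻ f = levelFrequency η w := by
    funext l
    rw [fourierInv_integral_levelMeasure hc hhs hh0, levelFrequency, oscIntegral]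
    congr 2 with z
    simp only [h, coareaAmplitude, AddChar.map_add_eq_mul, Circle.smul_def, Circle.coe_mul,
      smul_eq_mul, Complex.real_smul]
    push_cast
    ring
  have hint : Integrable (𝓕⁻ f) := by
    simpa only [hinv, pow_zero, one_smul] using integrable_pow_smul_levelFrequency hη hs h0 w 0
  have hint' : Integrable (𝓕 f) := by
    simpa only [fourierInv_eq_fourier_neg, neg_neg] using hint.comp_neg
  rw [← hinv, (continuous_integral_levelMeasure hc hhs hh0).fourier_fourierInv_eq
    (integrable_integral_levelMeasure hc hhs hh0) hint']
  exact funext fun s => sigmaCheck_eq η s w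

theorem contDiff_sigmaCheck (hη : ContDiff ℝ ∞ η) (hs : HasCompactSupport η)
    (h0 : 0 ∉ tsupport η) (w : Spacetime m) : ContDiff ℝ ∞ fun s => sigmaCheck η s w := by
  rw [sigmaCheck_eq_fourier hη hs h0 w]
  refine Real.contDiff_fourier fun k _ => ?_
  simpa only [norm_smul, norm_pow] using (integrable_pow_smul_levelFrequency hη hs h0 w k).norm

theorem norm_iteratedDeriv_sigmaCheck (hη : ContDiff ℝ ∞ η) (hs : HasCompactSupport η)
    (h0 : 0 ∉ tsupport η) (w : Spacetime m) (k : ℕ) (s : ℝ) :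
    ‖iteratedDeriv k (fun s' => sigmaCheck η s' w) s‖ = (2 * π) ^ k * hausdorffFactor m *
      ‖∫ l, 𝐞 (-(s * l)) • (l ^ k : ℝ) • oscIntegral (coareaAmplitude η) w l‖ := by
  rw [sigmaCheck_eq_fourier hη hs h0 w, Real.iteratedDeriv_fourier
    (fun j _ => integrable_pow_smul_levelFrequency hη hs h0 w j) (le_top (a := (k : ℕ∞)))]
  have hfactor (l : ℝ) : (-2 * π * Complex.I * l) ^ k • levelFrequency η w l =
      ((-2 * π * Complex.I) ^ k * hausdorffFactor m) •
        (l ^ k : ℝ) • oscIntegral (coareaAmplitude η) w l := by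
    simp only [levelFrequency, NNReal.smul_def, Complex.real_smul, smul_eq_mul]
    push_cast
    ring
  simp only [hfactor]
  rw [Real.fourier_eq]
  simp only [smul_comm (𝐞 _)]
  rw [integral_smul, norm_smul, norm_mul, norm_pow]
  simp [abs_of_pos pi_pos]

theorem hasCompactSupport_and_zero_notMem_tsupport {E F : Type*} [NormedAddCommGroup E]
    [ProperSpace E] [Zero F] {f : E → F} {r R : ℝ} (hr : 0 < r)
    (hf : ∀ z, f z ≠ 0 → r ≤ ‖z‖ ∧ ‖z‖ ≤ R) : HasCompactSupport f ∧ 0 ∉ tsupport f := by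
  have hclosed : IsClosed {z : E | r ≤ ‖z‖ ∧ ‖z‖ ≤ R} :=
    (isClosed_le continuous_const continuous_norm).inter
      (isClosed_le continuous_norm continuous_const)
  have hsub : tsupport f ⊆ {z | r ≤ ‖z‖ ∧ ‖z‖ ≤ R} := closure_minimal hf hclosed
  refine ⟨(isCompact_closedBall (0 : E) R).of_isClosed_subset (isClosed_tsupport f)
    fun z hz => mem_closedBall_zero_iff.2 (hsub hz).2, fun h => ?_⟩
  exact absurd (hsub h).1 (by simpa using hr)

end FourierInLevel

end Wave

theorem statement8_general {m k : ℕ} (hk : 2 * k ≤ m) {η : Spacetime m → ℝ}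
    (hη : ContDiff ℝ (⊤ : ℕ∞) η) (hs : HasCompactSupport η) (h0 : 0 ∉ tsupport η) :
    (∀ w, ContDiff ℝ (⊤ : ℕ∞) fun s => sigmaCheck η s w) ∧
    ∃ C : ℝ, 0 < C ∧ ∀ (w : Spacetime m) (s : ℝ),
      ‖iteratedDeriv k (fun s' => sigmaCheck η s' w) s‖ ≤
        C * (1 + |timeCoord w|) ^ (k - ((m + 1 : ℕ) : ℝ) / 2 + 1) := by
  refine ⟨contDiff_sigmaCheck hη hs h0, ?_⟩
  obtain ⟨C, hC0, hC⟩ := exists_norm_integral_pow_smul_oscIntegral_le_of_isSelfAdjoint hk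
    ((hasCompactSupport_coareaAmplitude hs).toSchwartzMap (contDiff_coareaAmplitude hη h0))
    (hasCompactSupport_coareaAmplitude hs) (fun h => h0 (tsupport_coareaAmplitude_subset η h))
    (isSelfAdjoint_coareaAmplitude η)
  refine ⟨(2 * π) ^ k * hausdorffFactor m * C + 1, by positivity, fun w s => ?_⟩
  rw [norm_iteratedDeriv_sigmaCheck hη hs h0, add_one_mul, mul_assoc _ C]
  exact le_add_of_le_of_nonneg (by gcongr; exact hC w s) (by positivity)

/-- For `n ≥ 5` and any smooth radial bump function `η` supported on
the annulus `{1/4 ≤ ‖z‖ ≤ 5/4}`, there is a constant `C > 0` (depending only on `n`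
and `η`) such that for all `(x,t) ∈ ℝ^{n-1} × ℝ` and all `s ∈ (-1/10, 1/10)`, the
second derivative in `s` of `(σ_s^{(0)})^∨(x,t)` satisfies
`|∂_s² (σ_s^{(0)})^∨(x,t)| ≤ C (1+|t|)^{(2-n)/2 + 2}`. -/
theorem statement8 (n m : ℕ) (hn : 5 ≤ n) (hnm : m + 1 = n)
    (η : Spacetime m → ℝ)
    (hηsm : ContDiff ℝ (⊤ : ℕ∞) η)
    (hηrad : ∀ z z' : Spacetime m, ‖z‖ = ‖z'‖ → η z = η z')
    (hηsupp : ∀ z : Spacetime m, η z ≠ 0 → 1 / 4 ≤ ‖z‖ ∧ ‖z‖ ≤ 5 / 4) :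
    ∃ C : ℝ, 0 < C ∧ ∀ (w : Spacetime m) (s : ℝ), s ∈ Set.Ioo (-(1 / 10) : ℝ) (1 / 10) →
      ‖iteratedDeriv 2 (fun s' : ℝ => sigmaCheck η s' w) s‖
        ≤ C * (1 + |timeCoord w|) ^ (((2 : ℝ) - n) / 2 + 2) := by
  subst hnm
  obtain ⟨hs, h0⟩ := hasCompactSupport_and_zero_notMem_tsupport (by norm_num) hηsupp
  obtain ⟨-, C, hC0, hC⟩ := statement8_general (k := 2) (by omega) hηsm hs h0
  refine ⟨C, hC0, fun w s _ => (hC w s).trans_eq ?_⟩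
  push_cast
  ring_nf
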